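/- arXiv:1303.0503 — 11 statements merged into one kernel-verified Lean document; each statement's English description precedes it below -/
import Mathlib

section
/- Let p = 3 and q = p^m with m an even positive integer. Then n_{1,0} − n_{−1,0} + p⁵(n_{1,2} − n_{−1,2}) + p^{10}(n_{1,4} − n_{−1,4}) = (5(p^m − 1)(8p^m − 2p − 10) − p^{2m} + 1)·p^{m/2}. -/
open Complex Finset

noncomputable def zetaPow (p : ℕ) (a : ZMod p) : ℂ :=
  Complex.exp (2 * Real.pi * Complex.I * (a.val : ℂ) / (p : ℂ))

noncomputable def expSum (p m : ℕ) [Fact p.Prime]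
    (α β γ : GaloisField p m) : ℂ :=
  letI : Fintype (GaloisField p m) := Fintype.ofFinite _
  ∑ x : GaloisField p m,
    zetaPow p ((Algebra.trace (ZMod p) (GaloisField p m))
      (α * x ^ 2 + β * x ^ (p + 1) + γ * x ^ (p ^ 2 + 1)))

noncomputable def nval (p m : ℕ) (ε : ℤ) (j : ℕ) : ℂ :=
  if j % 2 = 0 then (ε : ℂ) * ((Real.sqrt ((p : ℝ) ^ (m + j)) : ℝ) : ℂ)
  else (ε : ℂ) * Complex.I * ((Real.sqrt ((p : ℝ) ^ (m + j)) : ℝ) : ℂ)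

noncomputable def nn (p m : ℕ) [Fact p.Prime] (ε : ℤ) (j : ℕ) : ℕ :=
  {t : GaloisField p m × GaloisField p m × GaloisField p m |
    t ≠ (0, 0, 0) ∧ expSum p m t.1 t.2.1 t.2.2 = nval p m ε j}.ncard

section TotallyIsotropic

variable {F : Type*} [Field F]

lemma dotProduct_eq_zero_of_mem_span {ι : Type*} [Fintype ι] {s : Set (ι → F)}
    (h : ∀ u ∈ s, ∀ v ∈ s, u ⬝ᵥ v = 0) {u v : ι → F}
    (hu : u ∈ Submodule.span F s) (hv : v ∈ Submodule.span F s) : u ⬝ᵥ v = 0 := by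
  induction hu, hv using Submodule.span_induction₂ with
  | mem_mem u v hu hv => exact h u hu v hv
  | zero_left => simp
  | zero_right => simp
  | add_left _ _ _ _ _ _ h₁ h₂ => rw [add_dotProduct, h₁, h₂, add_zero]
  | add_right _ _ _ _ _ _ h₁ h₂ => rw [dotProduct_add, h₁, h₂, add_zero]
  | smul_left _ _ _ _ _ h => rw [smul_dotProduct, h, smul_zero]
  | smul_right _ _ _ _ _ h => rw [dotProduct_smul, h, smul_zero]

/-- A totally isotropic subspace for the dot product has at most half the dimension of the
ambient space. -/
lemma two_mul_finrank_le_of_isotropic {ι : Type*} [Fintype ι] [DecidableEq ι]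
    (W : Submodule F (ι → F)) (h : ∀ u ∈ W, ∀ v ∈ W, u ⬝ᵥ v = 0) :
    2 * Module.finrank F W ≤ Fintype.card ι := by
  have hB : (Matrix.toBilin' (1 : Matrix ι ι F)).Nondegenerate :=
    LinearMap.BilinForm.nondegenerate_toBilin'_of_det_ne_zero' _ (by simp)
  have hle : W ≤ (Matrix.toBilin' (1 : Matrix ι ι F)).orthogonal W := fun v hv u hu ↦ by
    simpa [Matrix.toBilin'_apply'] using h u hu v hv
  have h₁ := Submodule.finrank_mono hle
  have h₂ := Submodule.finrank_le W
  rw [LinearMap.BilinForm.finrank_orthogonal hB] at h₁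
  rw [Module.finrank_fintype_fun_eq_card] at h₁ h₂
  omega

lemma finrank_span_pair {V : Type*} [AddCommGroup V] [Module F V] {u v : V}
    (hli : LinearIndependent F ![u, v]) : Module.finrank F (Submodule.span F {u, v}) = 2 := by
  have h := finrank_span_eq_card hli
  rwa [Matrix.range_cons_cons_empty, Fintype.card_fin] at h

/-- In dimension five a totally isotropic plane is its own set of isotropic orthogonal vectors. -/
lemma mem_span_pair_of_isotropic {u v w : Fin 5 → F} (hli : LinearIndependent F ![u, v])
    (huu : u ⬝ᵥ u = 0) (huv : u ⬝ᵥ v = 0) (hvv : v ⬝ᵥ v = 0) (huw : u ⬝ᵥ w = 0)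
    (hvw : v ⬝ᵥ w = 0) (hww : w ⬝ᵥ w = 0) : w ∈ Submodule.span F {u, v} := by
  have hiso : ∀ a ∈ ({u, v, w} : Set (Fin 5 → F)), ∀ b ∈ ({u, v, w} : Set (Fin 5 → F)),
      a ⬝ᵥ b = 0 := by
    rintro a (rfl | rfl | rfl) b (rfl | rfl | rfl) <;>
      first | assumption | (rw [dotProduct_comm]; assumption)
  have h₁ := two_mul_finrank_le_of_isotropic (Submodule.span F {u, v, w})
    fun a ha b hb ↦ dotProduct_eq_zero_of_mem_span hiso ha hb
  have h₂ : Module.finrank F (Submodule.span F {u, v}) = 2 :=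
    finrank_span_pair hli
  have hle : Submodule.span F {u, v} ≤ Submodule.span F {u, v, w} :=
    Submodule.span_mono (by grind)
  rw [Submodule.eq_of_le_of_finrank_le hle (by simp at h₁; omega)]
  exact Submodule.subset_span (by simp)

end TotallyIsotropic

section TernaryCount

/-- The number of vectors of `𝔽₃⁵` orthogonal to a nonzero vector. -/
lemma card_orthogonal_eq {u : Fin 5 → ZMod 3} (hu : u ≠ 0) :
    #{v : Fin 5 → ZMod 3 | u ⬝ᵥ v = 0} = 81 := by
  classical
  have hf : dotProductEquiv (ZMod 3) (Fin 5) u ≠ 0 := by simpa using hu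
  have h₁ := Module.Dual.finrank_ker_add_one_of_ne_zero hf
  have h₂ := Module.card_eq_pow_finrank (K := ZMod 3)
    (V := LinearMap.ker (dotProductEquiv (ZMod 3) (Fin 5) u))
  rw [Module.finrank_fintype_fun_eq_card, Fintype.card_fin] at h₁
  rw [show Module.finrank (ZMod 3) (LinearMap.ker (dotProductEquiv (ZMod 3) (Fin 5) u)) = 4 by
    omega, ZMod.card] at h₂
  rw [← Fintype.card_subtype]
  rw [show 81 = 3 ^ 4 by norm_num, ← h₂]
  exact Fintype.card_congr (Equiv.refl _)

lemma card_isotropic : #{v : Fin 5 → ZMod 3 | v ⬝ᵥ v = 0} = 81 := by decide +kernel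

/-- Each coset of an isotropic line `⟨u⟩` not orthogonal to `u` has one isotropic vector. -/
lemma three_mul_card_isotropic_not_orthogonal {u : Fin 5 → ZMod 3} (huu : u ⬝ᵥ u = 0) :
    3 * #{v : Fin 5 → ZMod 3 | v ⬝ᵥ v = 0 ∧ u ⬝ᵥ v ≠ 0} =
      #{v : Fin 5 → ZMod 3 | u ⬝ᵥ v ≠ 0} := by
  have hcard : #(univ : Finset (ZMod 3)) = 3 := by rw [Finset.card_univ, ZMod.card]
  refine (congrArg (· * _) hcard).symm.trans ?_
  rw [mul_comm, ← Finset.card_product]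
  refine Finset.card_bij' (fun z _ ↦ z.1 + z.2 • u)
    (fun v _ ↦ (v + ((v ⬝ᵥ v) * (u ⬝ᵥ v)) • u, -((v ⬝ᵥ v) * (u ⬝ᵥ v)))) ?_ ?_ ?_ ?_
  · rintro ⟨v, t⟩ h
    simp_all
  · intro v h
    have h₁ : ∀ a b : ZMod 3, b ≠ 0 → a + a * b * b + a * b * b = 0 := by decide
    simp_all [dotProduct_comm v u]
  · rintro ⟨v, t⟩ h
    have h₁ : ∀ t b : ZMod 3, b ≠ 0 → (t * b + t * b) * b = - t := by decide
    simp_all [dotProduct_comm v u]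
  · rintro v -
    simp

lemma card_isotropic_orthogonal {u : Fin 5 → ZMod 3} (hu : u ≠ 0) (huu : u ⬝ᵥ u = 0) :
    #{v : Fin 5 → ZMod 3 | v ⬝ᵥ v = 0 ∧ u ⬝ᵥ v = 0} = 27 := by
  have h₁ := three_mul_card_isotropic_not_orthogonal huu
  have h₂ := Finset.card_filter_add_card_filter_not (s := (univ : Finset (Fin 5 → ZMod 3)))
    (fun v ↦ u ⬝ᵥ v = 0)
  have h₃ := Finset.card_filter_add_card_filter_not
    (s := ({v | v ⬝ᵥ v = 0} : Finset (Fin 5 → ZMod 3))) (fun v ↦ u ⬝ᵥ v = 0)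
  rw [card_orthogonal_eq hu, Finset.card_univ, Fintype.card_fun, ZMod.card, Fintype.card_fin] at h₂
  rw [card_isotropic, Finset.filter_filter, Finset.filter_filter] at h₃
  simp only [ne_eq] at h₁
  omega

/-- The number of `m`-tuples of pairwise orthogonal isotropic vectors in `𝔽₃⁵` that are
orthogonal to both `u` and `v`. -/
def isotropicTupleCount (m : ℕ) (u v : Fin 5 → ZMod 3) : ℕ :=
  #{w : Fin m → Fin 5 → ZMod 3 |
    (∀ j k, w j ⬝ᵥ w k = 0) ∧ ∀ j, u ⬝ᵥ w j = 0 ∧ v ⬝ᵥ w j = 0}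

lemma isotropicTupleCount_comm (m : ℕ) (u v : Fin 5 → ZMod 3) :
    isotropicTupleCount m u v = isotropicTupleCount m v u := by
  simp only [isotropicTupleCount, and_comm]

lemma isotropicTupleCount_smul (m : ℕ) (u : Fin 5 → ZMod 3) (c : ZMod 3) :
    isotropicTupleCount m u (c • u) = isotropicTupleCount m u 0 := by
  unfold isotropicTupleCount
  congr 1
  ext w
  simp only [mem_filter, mem_univ, true_and, smul_dotProduct, zero_dotProduct, and_true]
  exact and_congr_right fun _ ↦ forall_congr' fun j ↦
    and_iff_left_of_imp fun h ↦ by rw [h, smul_zero]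

lemma isotropicTupleCount_succ (m : ℕ) (u : Fin 5 → ZMod 3) :
    isotropicTupleCount (m + 1) u 0 =
      ∑ v : Fin 5 → ZMod 3 with v ⬝ᵥ v = 0 ∧ u ⬝ᵥ v = 0, isotropicTupleCount m u v := by
  have hmaps : Set.MapsTo (fun w : Fin (m + 1) → Fin 5 → ZMod 3 ↦ w 0)
      ({w | (∀ j k, w j ⬝ᵥ w k = 0) ∧
        ∀ j, u ⬝ᵥ w j = 0 ∧ (0 : Fin 5 → ZMod 3) ⬝ᵥ w j = 0} :
          Finset (Fin (m + 1) → Fin 5 → ZMod 3))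
      ({v | v ⬝ᵥ v = 0 ∧ u ⬝ᵥ v = 0} : Finset (Fin 5 → ZMod 3)) := by
    intro w hw
    simp_all
  rw [isotropicTupleCount, Finset.card_eq_sum_card_fiberwise hmaps]
  refine Finset.sum_congr rfl fun v hv ↦ ?_
  refine Finset.card_nbij' Fin.tail (fun w ↦ Fin.cons v w) ?_ ?_ ?_ ?_
  · intro w hw
    rw [Finset.mem_coe, mem_filter, mem_filter] at hw
    obtain ⟨⟨-, h₁, h₂⟩, rfl⟩ := hw
    rw [Finset.mem_coe, mem_filter]
    exact ⟨mem_univ _, fun j k ↦ h₁ _ _, fun j ↦ ⟨(h₂ _).1, h₁ _ _⟩⟩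
  · intro w hw
    simp_all [Fin.forall_fin_succ, dotProduct_comm _ v]
  · rintro w hw
    rw [← (mem_filter.1 hw).2]
    exact Fin.cons_self_tail w
  · intro w hw
    exact Fin.tail_cons _ _

lemma isotropicTupleCount_of_linearIndependent (m : ℕ) {u v : Fin 5 → ZMod 3}
    (hli : LinearIndependent (ZMod 3) ![u, v])
    (huu : u ⬝ᵥ u = 0) (huv : u ⬝ᵥ v = 0) (hvv : v ⬝ᵥ v = 0) :
    isotropicTupleCount m u v = 9 ^ m := by
  classical
  have hiso : ∀ a ∈ ({u, v} : Set (Fin 5 → ZMod 3)), ∀ b ∈ ({u, v} : Set (Fin 5 → ZMod 3)),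
      a ⬝ᵥ b = 0 := by
    rintro a (rfl | rfl) b (rfl | rfl) <;>
      first | assumption | (rw [dotProduct_comm]; assumption)
  have hfin : Module.finrank (ZMod 3) (Submodule.span (ZMod 3) {u, v}) = 2 :=
    finrank_span_pair hli
  have hcard : Fintype.card (Submodule.span (ZMod 3) {u, v}) = 9 := by
    rw [Module.card_eq_pow_finrank (K := ZMod 3), hfin, ZMod.card]
    norm_num
  have hset : ({w : Fin m → Fin 5 → ZMod 3 |
      (∀ j k, w j ⬝ᵥ w k = 0) ∧ ∀ j, u ⬝ᵥ w j = 0 ∧ v ⬝ᵥ w j = 0} : Finset _) =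
      Fintype.piFinset fun _ ↦ {w | w ∈ Submodule.span (ZMod 3) {u, v}} := by
    ext w
    simp only [mem_filter, mem_univ, true_and, Fintype.mem_piFinset]
    constructor
    · rintro ⟨h₁, h₂⟩ j
      exact mem_span_pair_of_isotropic hli huu huv hvv (h₂ j).1 (h₂ j).2 (h₁ j j)
    · intro h
      refine ⟨fun j k ↦ dotProduct_eq_zero_of_mem_span hiso (h j) (h k), fun j ↦ ⟨?_, ?_⟩⟩ <;>
        exact dotProduct_eq_zero_of_mem_span hiso (Submodule.subset_span (by simp)) (h j)
  rw [isotropicTupleCount, hset, Fintype.card_piFinset, Finset.prod_const, Finset.card_univ,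
    Fintype.card_fin, ← Fintype.card_subtype]
  exact congrArg (· ^ m) hcard

lemma isotropicTupleCount_of_isotropic (m : ℕ) {u : Fin 5 → ZMod 3} (hu : u ≠ 0)
    (huu : u ⬝ᵥ u = 0) : isotropicTupleCount m u 0 + 3 * 3 ^ m = 4 * 9 ^ m := by
  classical
  induction m with
  | zero => simp [isotropicTupleCount]
  | succ m ih =>
    set D : Finset (Fin 5 → ZMod 3) := {v | v ⬝ᵥ v = 0 ∧ u ⬝ᵥ v = 0} with hD
    set L : Finset (Fin 5 → ZMod 3) := univ.image fun c : ZMod 3 ↦ c • u with hL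
    have hLD : L ⊆ D := by
      intro v hv
      obtain ⟨c, -, rfl⟩ := Finset.mem_image.1 hv
      simp [hD, huu]
    have hLcard : #L = 3 := by
      rw [hL, Finset.card_image_of_injective _ (smul_left_injective _ hu), Finset.card_univ,
        ZMod.card]
    have hDcard : #(D \ L) = 24 := by
      rw [Finset.card_sdiff_of_subset hLD, hLcard, card_isotropic_orthogonal hu huu]
    rw [isotropicTupleCount_succ, ← Finset.sum_sdiff hLD,
      Finset.sum_congr rfl (g := fun _ ↦ 9 ^ m), Finset.sum_congr rfl (s₁ := L)
        (g := fun _ ↦ isotropicTupleCount m u 0)]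
    · rw [Finset.sum_const, Finset.sum_const, hLcard, hDcard, smul_eq_mul, smul_eq_mul]
      ring_nf at ih ⊢
      omega
    · intro v hv
      obtain ⟨c, -, rfl⟩ := Finset.mem_image.1 hv
      exact isotropicTupleCount_smul m u c
    · intro v hv
      obtain ⟨h₁, h₂⟩ := Finset.mem_sdiff.1 hv
      simp only [hD, mem_filter, mem_univ, true_and] at h₁
      refine isotropicTupleCount_of_linearIndependent m
        ((LinearIndependent.pair_iff' hu).2 fun c hc ↦ h₂ ?_) huu h₁.2 h₁.1
      exact Finset.mem_image.2 ⟨c, mem_univ _, hc⟩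

lemma isotropicTupleCount_zero_zero (m : ℕ) :
    (isotropicTupleCount m 0 0 : ℤ) = 40 * (3 ^ m - 1) * (3 ^ m - 2) + 1 := by
  induction m with
  | zero => simp [isotropicTupleCount]
  | succ m ih =>
    have h0 : (0 : Fin 5 → ZMod 3) ∈
        ({v | v ⬝ᵥ v = 0 ∧ (0 : Fin 5 → ZMod 3) ⬝ᵥ v = 0} : Finset (Fin 5 → ZMod 3)) := by simp
    have hC : ∀ v ∈ ({v | v ⬝ᵥ v = 0 ∧ (0 : Fin 5 → ZMod 3) ⬝ᵥ v = 0} :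
        Finset (Fin 5 → ZMod 3)).erase 0,
        (isotropicTupleCount m 0 v : ℤ) = 4 * 9 ^ m - 3 * 3 ^ m := by
      intro v hv
      simp only [mem_erase, mem_filter, mem_univ, true_and] at hv
      rw [isotropicTupleCount_comm]
      have := isotropicTupleCount_of_isotropic m hv.1 hv.2.1
      zify at this
      linarith
    have hcard : #({v | v ⬝ᵥ v = 0 ∧ (0 : Fin 5 → ZMod 3) ⬝ᵥ v = 0} :
        Finset (Fin 5 → ZMod 3)) = 81 := by
      simpa using card_isotropic
    rw [isotropicTupleCount_succ, ← Finset.add_sum_erase _ _ h0]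
    push_cast
    rw [Finset.sum_congr rfl hC, Finset.sum_const, Finset.card_erase_of_mem h0, hcard, ih,
      show (9 : ℤ) ^ m = (3 ^ m) ^ 2 by rw [← pow_mul, mul_comm, pow_mul]; norm_num]
    simp only [nsmul_eq_mul]
    push_cast
    ring

end TernaryCount

section FrobeniusIsotropic

variable {K : Type*} [Field K]

lemma dotProduct_pow_three [CharP K 3] {ι : Type*} [Fintype ι] (x y : ι → K) :
    (x ^ 3) ⬝ᵥ (y ^ 3) = (x ⬝ᵥ y) ^ 3 := by
  simp only [dotProduct, Pi.pow_apply, sum_pow_char 3, mul_pow]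

/-- If `x` is orthogonal to its first Frobenius twists, then all twists of `x` lie in the
totally isotropic space spanned by `x` and its first twist. -/
lemma pow_mem_span_of_isotropic [CharP K 3] {x : Fin 5 → K} (h₀ : x ⬝ᵥ x = 0)
    (h₁ : x ⬝ᵥ x ^ 3 = 0) (h₂ : x ⬝ᵥ x ^ 9 = 0) (n : ℕ) :
    x ^ 3 ^ n ∈ Submodule.span K {x, x ^ 3} := by
  have h9 : x ^ 9 = (x ^ 3) ^ 3 := by rw [← pow_mul]
  have h₁₁ : x ^ 3 ⬝ᵥ x ^ 3 = 0 := by rw [dotProduct_pow_three, h₀, zero_pow three_ne_zero]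
  have h₁₂ : x ^ 3 ⬝ᵥ x ^ 9 = 0 := by rw [h9, dotProduct_pow_three, h₁, zero_pow three_ne_zero]
  have h₂₂ : x ^ 9 ⬝ᵥ x ^ 9 = 0 := by rw [h9, dotProduct_pow_three, h₁₁, zero_pow three_ne_zero]
  have hx3 : x ^ 3 ∈ Submodule.span K {x, x ^ 3} := Submodule.subset_span (by simp)
  have hx9 : x ^ 9 ∈ Submodule.span K {x, x ^ 3} := by
    by_cases hli : LinearIndependent K ![x, x ^ 3]
    · exact mem_span_pair_of_isotropic hli h₀ h₁ h₁₁ h₂ h₁₂ h₂₂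
    · rcases eq_or_ne x 0 with hx | hx
      · simp [hx]
      · rw [LinearIndependent.pair_iff' hx] at hli
        push Not at hli
        obtain ⟨c, hc⟩ := hli
        have : x ^ 9 = c ^ 3 • x ^ 3 := by rw [h9, ← smul_pow, hc]
        rw [this]
        exact Submodule.smul_mem _ _ hx3
  induction n with
  | zero => simpa using Submodule.subset_span (by simp)
  | succ n ih =>
    obtain ⟨a, b, hab⟩ := Submodule.mem_span_pair.1 ih
    have : x ^ 3 ^ (n + 1) = a ^ 3 • x ^ 3 + b ^ 3 • x ^ 9 := by
      rw [pow_succ, pow_mul, ← hab, h9, ← smul_pow, ← smul_pow]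
      funext i
      simp only [Pi.pow_apply, Pi.add_apply, add_pow_expChar (p := 3)]
    rw [this]
    exact Submodule.add_mem _ (Submodule.smul_mem _ _ hx3) (Submodule.smul_mem _ _ hx9)

lemma pow_dotProduct_pow_eq_zero [CharP K 3] {x : Fin 5 → K} (h₀ : x ⬝ᵥ x = 0)
    (h₁ : x ⬝ᵥ x ^ 3 = 0) (h₂ : x ⬝ᵥ x ^ 9 = 0) (j k : ℕ) :
    x ^ 3 ^ j ⬝ᵥ x ^ 3 ^ k = 0 := by
  refine dotProduct_eq_zero_of_mem_span (s := {x, x ^ 3}) ?_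
    (pow_mem_span_of_isotropic h₀ h₁ h₂ j) (pow_mem_span_of_isotropic h₀ h₁ h₂ k)
  have h₁₁ : x ^ 3 ⬝ᵥ x ^ 3 = 0 := by rw [dotProduct_pow_three, h₀, zero_pow three_ne_zero]
  rintro a (rfl | rfl) b (rfl | rfl) <;>
    first | assumption | (rw [dotProduct_comm]; assumption)

variable [Fintype K] [Algebra (ZMod 3) K]

lemma trace_dotProduct_trace_eq_zero {x : Fin 5 → K} (h₀ : x ⬝ᵥ x = 0)
    (h₁ : x ⬝ᵥ x ^ 3 = 0) (h₂ : x ⬝ᵥ x ^ 9 = 0) (c d : K) :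
    (fun i ↦ Algebra.trace (ZMod 3) K (x i * c)) ⬝ᵥ
      (fun i ↦ Algebra.trace (ZMod 3) K (x i * d)) = 0 := by
  have : CharP K 3 := charP_of_injective_algebraMap' (ZMod 3) 3
  apply FaithfulSMul.algebraMap_injective (ZMod 3) K
  simp only [dotProduct, map_sum, map_mul, FiniteField.algebraMap_trace_eq_sum_pow, map_zero,
    Nat.card_zmod, Finset.sum_mul_sum]
  rw [Finset.sum_comm]
  refine Finset.sum_eq_zero fun j _ ↦ ?_
  rw [Finset.sum_comm]
  refine Finset.sum_eq_zero fun k _ ↦ ?_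
  have h := pow_dotProduct_pow_eq_zero h₀ h₁ h₂ j k
  calc ∑ i, (x i * c) ^ 3 ^ j * (x i * d) ^ 3 ^ k
      = c ^ 3 ^ j * d ^ 3 ^ k * (x ^ 3 ^ j ⬝ᵥ x ^ 3 ^ k) := by
        rw [dotProduct, Finset.mul_sum]
        refine Finset.sum_congr rfl fun i _ ↦ ?_
        simp only [Pi.pow_apply]
        ring
    _ = 0 := by rw [h, mul_zero]

/-- The twisted products of a vector whose coordinate vectors in an `𝔽₃`-basis are pairwise
orthogonal vanish. -/
lemma dotProduct_pow_eq_zero_of_repr {ι : Type*} [Fintype ι] (b : Module.Basis ι (ZMod 3) K)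
    {x : Fin 5 → K}
    (h : ∀ j k, (fun i ↦ b.repr (x i) j) ⬝ᵥ (fun i ↦ b.repr (x i) k) = 0) (n : ℕ) :
    x ⬝ᵥ x ^ 3 ^ n = 0 := by
  have : CharP K 3 := charP_of_injective_algebraMap' (ZMod 3) 3
  have hx : ∀ i, x i = ∑ k, algebraMap (ZMod 3) K (b.repr (x i) k) * b k := fun i ↦ by
    simpa only [Algebra.smul_def] using (b.sum_repr (x i)).symm
  have hxn : ∀ i, x i ^ 3 ^ n = ∑ k, algebraMap (ZMod 3) K (b.repr (x i) k) * b k ^ 3 ^ n := by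
    intro i
    conv_lhs => rw [hx i]
    rw [sum_pow_char_pow 3]
    refine Finset.sum_congr rfl fun k _ ↦ ?_
    rw [mul_pow, ← map_pow, ZMod.pow_card_pow]
  calc x ⬝ᵥ x ^ 3 ^ n
      = ∑ i, ∑ j, ∑ k, (b j * b k ^ 3 ^ n) *
          algebraMap (ZMod 3) K (b.repr (x i) j * b.repr (x i) k) := by
        refine Finset.sum_congr rfl fun i _ ↦ ?_
        rw [Pi.pow_apply, hxn i]
        conv_lhs => arg 1; rw [hx i]
        rw [Finset.sum_mul_sum]
        refine Finset.sum_congr rfl fun j _ ↦ Finset.sum_congr rfl fun k _ ↦ ?_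
        rw [map_mul]
        ring
    _ = ∑ j, ∑ k, (b j * b k ^ 3 ^ n) * algebraMap (ZMod 3) K
          ((fun i ↦ b.repr (x i) j) ⬝ᵥ (fun i ↦ b.repr (x i) k)) := by
        rw [Finset.sum_comm]
        refine Finset.sum_congr rfl fun j _ ↦ ?_
        rw [Finset.sum_comm]
        refine Finset.sum_congr rfl fun k _ ↦ ?_
        rw [dotProduct, map_sum, Finset.mul_sum]
    _ = 0 := by simp only [h, map_zero, mul_zero, Finset.sum_const_zero]

/-- The number of solutions of `∑ xᵢ² = ∑ xᵢ⁴ = ∑ xᵢ¹⁰ = 0` in five unknowns over a finite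
field of characteristic three. -/
lemma card_power_sum_system [DecidableEq K] :
    (#{x : Fin 5 → K | ∑ i, x i ^ 2 = 0 ∧ ∑ i, x i ^ 4 = 0 ∧ ∑ i, x i ^ 10 = 0} : ℤ) =
      40 * ((Fintype.card K : ℤ) - 1) * ((Fintype.card K : ℤ) - 2) + 1 := by
  let b₀ := Module.finBasis (ZMod 3) K
  let b := b₀.traceDual
  have hq : (Fintype.card K : ℤ) = 3 ^ Module.finrank (ZMod 3) K := by
    rw [Module.card_eq_pow_finrank (K := ZMod 3) (V := K), ZMod.card]
    push_cast
    rfl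
  rw [hq, ← isotropicTupleCount_zero_zero, isotropicTupleCount, Nat.cast_inj]
  refine Finset.card_nbij' (fun x k i ↦ b.repr (x i) k)
    (fun w i ↦ b.equivFun.symm fun k ↦ w k i) ?_ ?_ ?_ ?_
  · intro x hx
    obtain ⟨-, h₂, h₄, h₁₀⟩ := mem_filter.1 hx
    refine mem_filter.2 ⟨mem_univ _, fun j k ↦ ?_, by simp⟩
    simp only [b, Module.Basis.traceDual_repr_apply, Algebra.traceForm_apply]
    refine trace_dotProduct_trace_eq_zero ?_ ?_ ?_ _ _
    · rw [← h₂]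
      exact Finset.sum_congr rfl fun i _ ↦ (pow_two _).symm
    · rw [← h₄]
      exact Finset.sum_congr rfl fun i _ ↦ (pow_succ' _ _).symm
    · rw [← h₁₀]
      exact Finset.sum_congr rfl fun i _ ↦ (pow_succ' _ _).symm
  · intro w hw
    obtain ⟨-, h, -⟩ := mem_filter.1 hw
    have key := dotProduct_pow_eq_zero_of_repr b
      (x := fun i ↦ b.equivFun.symm fun k ↦ w k i) (fun j k ↦ by
        convert h j k using 2 <;> · funext i; exact congrFun (b.equivFun.apply_symm_apply _) _)
    refine mem_filter.2 ⟨mem_univ _, ?_, ?_, ?_⟩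
    · rw [← key 0]
      exact Finset.sum_congr rfl fun i _ ↦ by simp [pow_two]
    · rw [← key 1]
      exact Finset.sum_congr rfl fun i _ ↦ pow_succ' _ _
    · rw [← key 2]
      exact Finset.sum_congr rfl fun i _ ↦ pow_succ' _ _
  · intro x _
    funext i
    exact b.equivFun.symm_apply_apply (x i)
  · intro w _
    funext k i
    exact congrFun (b.equivFun.apply_symm_apply fun k ↦ w k i) k

end FrobeniusIsotropic

section QuadraticCharSum

variable (K : Type*) [Field K] [Algebra (ZMod 3) K]

/-- The canonical complex additive character of a finite field of characteristic three. -/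
noncomputable def traceChar : AddChar K ℂ :=
  (ZMod.stdAddChar (N := 3)).compAddMonoidHom (Algebra.trace (ZMod 3) K).toAddMonoidHom

lemma traceChar_apply (a : K) :
    traceChar K a = ZMod.stdAddChar (Algebra.trace (ZMod 3) K a) := rfl

variable {K}

/-- The value at `x` of the quadratic form with coefficients `t`. -/
def frobeniusForm (t : K × K × K) (x : K) : K :=
  t.1 * x ^ 2 + t.2.1 * x ^ 4 + t.2.2 * x ^ 10

/-- The linearized polynomial map whose kernel is the radical of `frobeniusForm t`. -/
def radicalMap (t : K × K × K) (z : K) : K :=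
  t.2.2 ^ 9 * z ^ 81 + t.2.1 ^ 9 * z ^ 27 + 2 * t.1 ^ 9 * z ^ 9 + t.2.1 ^ 3 * z ^ 3 + t.2.2 * z

lemma frobeniusForm_add (t : K × K × K) (z y : K) :
    frobeniusForm t (z + y) = frobeniusForm t z + frobeniusForm t y +
      (2 * t.1 * z * y + t.2.1 * (z ^ 3 * y + z * y ^ 3) +
        t.2.2 * (z ^ 9 * y + z * y ^ 9)) := by
  have : CharP K 3 := charP_of_injective_algebraMap' (ZMod 3) 3
  have h₃ : (z + y) ^ 3 = z ^ 3 + y ^ 3 := add_pow_char z y 3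
  have h₉ : (z + y) ^ 9 = z ^ 9 + y ^ 9 := add_pow_char_pow z y 3 2
  simp only [frobeniusForm]
  rw [show (z + y) ^ 4 = (z + y) * (z + y) ^ 3 by ring,
    show (z + y) ^ 10 = (z + y) * (z + y) ^ 9 by ring, h₃, h₉]
  ring

variable [Fintype K]

variable (K) in
lemma isPrimitive_traceChar : (traceChar K).IsPrimitive := by
  refine AddChar.IsPrimitive.of_ne_one (AddChar.ne_one_iff.2 ?_)
  obtain ⟨a, ha⟩ := Algebra.trace_surjective (ZMod 3) K 1
  refine ⟨a, fun h ↦ ?_⟩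
  rw [traceChar_apply, ha,
    AddChar.IsPrimitive.zmod_char_eq_one_iff 3 (ZMod.isPrimitive_stdAddChar 3)] at h
  exact one_ne_zero h

lemma traceChar_pow_three_pow (a : K) (n : ℕ) : traceChar K (a ^ 3 ^ n) = traceChar K a := by
  have : CharP K 3 := charP_of_injective_algebraMap' (ZMod 3) 3
  have h : ∀ b : K, traceChar K (b ^ 3) = traceChar K b := fun b ↦ by
    rw [traceChar_apply, traceChar_apply, ← Algebra.trace_eq_of_algEquiv
      (FiniteField.frobeniusAlgEquiv (ZMod 3) K 3) b]
    simp
  induction n with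
  | zero => simp
  | succ n ih => rw [pow_succ, pow_mul, h, ih]

/-- The exponential sum of `frobeniusForm t`. -/
noncomputable def formSum (t : K × K × K) : ℂ := ∑ x, traceChar K (frobeniusForm t x)

lemma sum_formSum_pow_five [DecidableEq K] :
    ∑ t : K × K × K, formSum t ^ 5 = (Fintype.card K : ℂ) ^ 3 *
      #{x : Fin 5 → K | ∑ i, x i ^ 2 = 0 ∧ ∑ i, x i ^ 4 = 0 ∧ ∑ i, x i ^ 10 = 0} := by
  have hexpand : ∀ (t : K × K × K) (x : Fin 5 → K),
      ∏ i, traceChar K (frobeniusForm t (x i)) =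
        traceChar K (t.1 * ∑ i, x i ^ 2) *
          (traceChar K (t.2.1 * ∑ i, x i ^ 4) * traceChar K (t.2.2 * ∑ i, x i ^ 10)) := by
    intro t x
    simp only [Fin.prod_univ_five, Fin.sum_univ_five, ← AddChar.map_add_eq_mul, frobeniusForm]
    congr 1
    ring
  simp only [formSum, Fintype.sum_pow, hexpand]
  rw [Finset.sum_comm]
  simp only [Fintype.sum_prod_type, ← Finset.mul_sum, ← Finset.sum_mul,
    AddChar.sum_mulShift _ (isPrimitive_traceChar K)]
  rw [Finset.card_filter, Nat.cast_sum, Finset.mul_sum]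
  refine Finset.sum_congr rfl fun x _ ↦ ?_
  by_cases h₁ : ∑ i, x i ^ 2 = 0 <;> by_cases h₂ : ∑ i, x i ^ 4 = 0 <;>
    by_cases h₃ : ∑ i, x i ^ 10 = 0 <;> simp [h₁, h₂, h₃]
  ring

lemma traceChar_polar (t : K × K × K) (z y : K) :
    traceChar K (2 * t.1 * z * y + t.2.1 * (z ^ 3 * y + z * y ^ 3) +
      t.2.2 * (z ^ 9 * y + z * y ^ 9)) = traceChar K (y ^ 9 * radicalMap t z) := by
  have : CharP K 3 := charP_of_injective_algebraMap' (ZMod 3) 3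
  have h3 : (3 : K) = 0 := by exact_mod_cast CharP.cast_eq_zero K 3
  have e₁ := traceChar_pow_three_pow (2 * t.1 * z * y) 2
  have e₂ := traceChar_pow_three_pow (t.2.1 * z ^ 3 * y) 2
  have e₃ := traceChar_pow_three_pow (t.2.1 * z * y ^ 3) 1
  have e₄ := traceChar_pow_three_pow (t.2.2 * z ^ 9 * y) 2
  have split : 2 * t.1 * z * y + t.2.1 * (z ^ 3 * y + z * y ^ 3) +
      t.2.2 * (z ^ 9 * y + z * y ^ 9) = 2 * t.1 * z * y + t.2.1 * z ^ 3 * y +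
        t.2.1 * z * y ^ 3 + t.2.2 * z ^ 9 * y + t.2.2 * z * y ^ 9 := by ring
  rw [split]
  simp only [AddChar.map_add_eq_mul]
  rw [← e₁, ← e₂, ← e₃, ← e₄]
  simp only [← AddChar.map_add_eq_mul]
  congr 1
  simp only [radicalMap]
  linear_combination 170 * t.1 ^ 9 * z ^ 9 * y ^ 9 * h3

lemma traceChar_frobeniusForm_of_radicalMap_eq_zero {t : K × K × K} {z : K}
    (hz : radicalMap t z = 0) : traceChar K (frobeniusForm t z) = 1 := by
  have : CharP K 3 := charP_of_injective_algebraMap' (ZMod 3) 3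
  have h3 : (3 : K) = 0 := by exact_mod_cast CharP.cast_eq_zero K 3
  have h := traceChar_polar t z z
  rw [hz, mul_zero, AddChar.map_zero_eq_one, show 2 * t.1 * z * z +
    t.2.1 * (z ^ 3 * z + z * z ^ 3) + t.2.2 * (z ^ 9 * z + z * z ^ 9) = -frobeniusForm t z by
      simp only [frobeniusForm]
      linear_combination (t.1 * z ^ 2 + t.2.1 * z ^ 4 + t.2.2 * z ^ 10) * h3,
    AddChar.map_neg_eq_inv, inv_eq_one] at h
  exact h

lemma formSum_mul_conj [DecidableEq K] (t : K × K × K) :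
    formSum t * starRingEnd ℂ (formSum t) =
      (Fintype.card K : ℂ) * #{z : K | radicalMap t z = 0} := by
  have : CharP K 3 := charP_of_injective_algebraMap' (ZMod 3) 3
  have hbij : Function.Bijective fun y : K ↦ y ^ 9 :=
    Finite.injective_iff_bijective.1 (iterateFrobenius_inj K 3 2)
  have hinner : ∀ z, ∑ y, traceChar K (y ^ 9 * radicalMap t z) =
      if radicalMap t z = 0 then (Fintype.card K : ℂ) else 0 := fun z ↦ by
    rw [hbij.sum_comp fun y ↦ traceChar K (y * radicalMap t z),
      AddChar.sum_mulShift _ (isPrimitive_traceChar K)]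
    split_ifs <;> simp
  calc formSum t * starRingEnd ℂ (formSum t)
      = ∑ y, ∑ x, traceChar K (frobeniusForm t x) * traceChar K (-frobeniusForm t y) := by
        simp only [formSum, map_sum, Finset.sum_mul_sum, AddChar.map_neg_eq_conj]
        exact Finset.sum_comm
    _ = ∑ y, ∑ z, traceChar K (frobeniusForm t z) * traceChar K (y ^ 9 * radicalMap t z) := by
        refine Finset.sum_congr rfl fun y _ ↦ ?_
        rw [← Equiv.sum_comp (Equiv.addRight y)]
        refine Finset.sum_congr rfl fun z _ ↦ ?_
        rw [Equiv.coe_addRight, ← traceChar_polar, ← AddChar.map_add_eq_mul,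
          ← AddChar.map_add_eq_mul, frobeniusForm_add]
        congr 1
        ring
    _ = ∑ z, if radicalMap t z = 0 then (Fintype.card K : ℂ) else 0 := by
        rw [Finset.sum_comm]
        refine Finset.sum_congr rfl fun z _ ↦ ?_
        rw [← Finset.mul_sum, hinner]
        split_ifs with hz
        · rw [traceChar_frobeniusForm_of_radicalMap_eq_zero hz, one_mul]
        · rw [mul_zero]
    _ = _ := by
        rw [← Finset.sum_filter, Finset.sum_const, nsmul_eq_mul, mul_comm]

open Polynomial in
lemma card_radical_le [DecidableEq K] {t : K × K × K} (ht : t ≠ 0) :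
    #{z : K | radicalMap t z = 0} ≤ 81 := by
  have : CharP K 3 := charP_of_injective_algebraMap' (ZMod 3) 3
  have h2 : (2 : K) ≠ 0 := Ring.two_ne_zero (by rw [ringChar.eq K 3]; norm_num)
  let P : K[X] := C (t.2.2 ^ 9) * X ^ 81 + C (t.2.1 ^ 9) * X ^ 27 + C (2 * t.1 ^ 9) * X ^ 9 +
    C (t.2.1 ^ 3) * X ^ 3 + C t.2.2 * X
  have hP : P ≠ 0 := by
    intro hP
    have h₈₁ : P.coeff 81 = 0 := by rw [hP, coeff_zero]
    have h₂₇ : P.coeff 27 = 0 := by rw [hP, coeff_zero]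
    have h₉ : P.coeff 9 = 0 := by rw [hP, coeff_zero]
    simp only [P, coeff_add, coeff_C_mul, coeff_X_pow, coeff_X] at h₈₁ h₂₇ h₉
    norm_num [h2] at h₈₁ h₂₇ h₉
    exact ht (Prod.ext h₉ (Prod.ext h₂₇ h₈₁))
  have hdeg : P.natDegree ≤ 81 := by
    simp only [P]
    compute_degree
  refine (card_le_degree_of_subset_roots fun z hz ↦ ?_).trans hdeg
  have hz' : radicalMap t z = 0 := by simpa using hz
  rw [mem_roots hP, IsRoot.def, ← hz']
  simp [P, radicalMap]

lemma card_radical_eq_pow [DecidableEq K] {t : K × K × K} (ht : t ≠ 0) :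
    ∃ j ≤ 4, #{z : K | radicalMap t z = 0} = 3 ^ j := by
  have : CharP K 3 := charP_of_injective_algebraMap' (ZMod 3) 3
  let L : K →+ K := AddMonoidHom.mk' (radicalMap t) fun a b ↦ by
    have h₃ : (a + b) ^ 3 = a ^ 3 + b ^ 3 := add_pow_char a b 3
    have h₉ : (a + b) ^ 9 = a ^ 9 + b ^ 9 := add_pow_char_pow a b 3 2
    have h₂₇ : (a + b) ^ 27 = a ^ 27 + b ^ 27 := add_pow_char_pow a b 3 3
    have h₈₁ : (a + b) ^ 81 = a ^ 81 + b ^ 81 := add_pow_char_pow a b 3 4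
    simp only [radicalMap, h₃, h₉, h₂₇, h₈₁]
    ring
  have hcard : Nat.card L.ker = #{z : K | radicalMap t z = 0} := by
    rw [← Fintype.card_subtype, ← Nat.card_eq_fintype_card]
    exact Nat.card_congr (Equiv.refl _)
  have hdvd := L.ker.card_addSubgroup_dvd_card
  rw [hcard, Nat.card_eq_fintype_card (α := K),
    Module.card_eq_pow_finrank (K := ZMod 3) (V := K), ZMod.card,
    Nat.dvd_prime_pow Nat.prime_three] at hdvd
  obtain ⟨j, -, hj⟩ := hdvd
  refine ⟨j, ?_, hj⟩
  have hle := card_radical_le ht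
  rw [hj, show 81 = 3 ^ 4 by norm_num] at hle
  exact (Nat.pow_le_pow_iff_right (by norm_num)).1 hle

lemma stdAddChar_three_one : ZMod.stdAddChar (1 : ZMod 3) = (⟨-1 / 2, √3 / 2⟩ : ℂ) := by
  have h := ZMod.stdAddChar_coe (N := 3) 1
  rw [Int.cast_one] at h
  rw [h, show 2 * (Real.pi : ℂ) * I * ((1 : ℤ) : ℂ) / ((3 : ℕ) : ℂ) =
    ((Real.pi - Real.pi / 3 : ℝ) : ℂ) * I by push_cast; ring]
  apply Complex.ext
  · rw [Complex.exp_ofReal_mul_I_re, Real.cos_pi_sub, Real.cos_pi_div_three]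
    norm_num
  · rw [Complex.exp_ofReal_mul_I_im, Real.sin_pi_sub, Real.sin_pi_div_three]

/-- As `frobeniusForm t` is even, its sum lies in `ℤ[√-3]`. -/
lemma exists_formSum_eq (t : K × K × K) :
    ∃ u c : ℤ, formSum t = (⟨u, c * √3⟩ : ℂ) := by
  classical
  have : CharP K 3 := charP_of_injective_algebraMap' (ZMod 3) 3
  let N (a : ZMod 3) : ℕ := #{x : K | Algebra.trace (ZMod 3) K (frobeniusForm t x) = a}
  have heven : ∀ a : ZMod 3, a ≠ 0 → 2 ∣ N a := fun a ha ↦ by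
    rw [← ZMod.natCast_eq_zero_iff, Finset.cast_card]
    refine Finset.sum_involution (fun x _ ↦ -x) (fun _ _ ↦ by decide) ?_ ?_ ?_
    · intro x hx _ hneg
      have hx0 : x = 0 := by
        have h2 : (2 : K) ≠ 0 := Ring.two_ne_zero (by rw [ringChar.eq K 3]; norm_num)
        have : 2 * x = 0 := by linear_combination -hneg
        exact (mul_eq_zero.1 this).resolve_left h2
      refine ha ?_
      rw [← (mem_filter.1 hx).2, hx0]
      simp [frobeniusForm]
    · intro x hx
      refine mem_filter.2 ⟨mem_univ _, ?_⟩
      rw [← (mem_filter.1 hx).2]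
      congr 1
      simp only [frobeniusForm]
      ring
    · intro x _
      exact neg_neg x
  obtain ⟨n₁, h₁⟩ := heven 1 (by decide)
  obtain ⟨n₂, h₂⟩ := heven 2 (by decide)
  have hsum : formSum t = ∑ a : ZMod 3, (N a : ℂ) * ZMod.stdAddChar a := by
    rw [formSum, ← Finset.sum_fiberwise univ
      fun x ↦ Algebra.trace (ZMod 3) K (frobeniusForm t x)]
    refine Finset.sum_congr rfl fun a _ ↦ ?_
    rw [← nsmul_eq_mul, ← Finset.sum_const]
    refine Finset.sum_congr rfl fun x hx ↦ ?_
    rw [traceChar_apply, (mem_filter.1 hx).2]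
  have htwo : ZMod.stdAddChar (2 : ZMod 3) = (⟨-1 / 2, -(√3 / 2)⟩ : ℂ) := by
    rw [show (2 : ZMod 3) = -1 by decide, AddChar.map_neg_eq_conj, stdAddChar_three_one]
    rfl
  refine ⟨N 0 - n₁ - n₂, n₁ - n₂, ?_⟩
  have huniv : (univ : Finset (ZMod 3)) = {0, 1, 2} := by decide
  rw [hsum, huniv, Finset.sum_insert (by decide), Finset.sum_insert (by decide),
    Finset.sum_singleton, h₁, h₂, htwo, stdAddChar_three_one, AddChar.map_zero_eq_one]
  apply Complex.ext <;> simp <;> ring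

/-- A power of three is a norm from `ℤ[√-3]` only of rational or purely imaginary elements. -/
lemma eq_zero_or_eq_zero_of_sq_add_three_mul_sq {k : ℕ} {u c : ℤ}
    (h : u ^ 2 + 3 * c ^ 2 = 3 ^ k) : u = 0 ∨ c = 0 := by
  induction k generalizing u c with
  | zero =>
    right
    have : c ^ 2 < 1 := by nlinarith [sq_nonneg u]
    exact pow_eq_zero_iff two_ne_zero |>.1 (by nlinarith [sq_nonneg c])
  | succ k ih =>
    have h3 : (3 : ℤ) ∣ u := Int.prime_three.dvd_of_dvd_pow (n := 2) ⟨3 ^ k - c ^ 2, by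
      rw [pow_succ 3 k] at h
      linarith⟩
    obtain ⟨v, rfl⟩ := h3
    have := ih (u := c) (c := v) (by rw [pow_succ 3 k] at h; linarith)
    rcases this with h | h
    · exact Or.inr h
    · exact Or.inl (by rw [h, mul_zero])

/-- For a nonzero form the sum is purely imaginary, or an integer whose square is a power of
three. -/
lemma formSum_re_eq_zero_or {t : K × K × K} (ht : t ≠ 0) :
    (formSum t).re = 0 ∨ ∃ u : ℤ, formSum t = u ∧
      ∃ j ≤ 4, u ^ 2 = 3 ^ (Module.finrank (ZMod 3) K + j) := by
  classical
  obtain ⟨u, c, hS⟩ := exists_formSum_eq t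
  obtain ⟨j, hj, hrad⟩ := card_radical_eq_pow ht
  have hnorm := formSum_mul_conj t
  rw [hrad, Module.card_eq_pow_finrank (K := ZMod 3) (V := K), ZMod.card, Complex.mul_conj, hS,
    Complex.normSq_mk] at hnorm
  have hcast : u ^ 2 + 3 * c ^ 2 = 3 ^ (Module.finrank (ZMod 3) K + j) := by
    have h3 : √3 * √3 = (3 : ℝ) := Real.mul_self_sqrt (by norm_num)
    have hreal : (u : ℝ) * u + c * √3 * (c * √3) = 3 ^ Module.finrank (ZMod 3) K * 3 ^ j := by
      exact_mod_cast hnorm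
    rw [pow_add]
    have : (u : ℝ) ^ 2 + 3 * c ^ 2 = 3 ^ Module.finrank (ZMod 3) K * 3 ^ j := by
      rw [← hreal]
      linear_combination -(c : ℝ) ^ 2 * h3
    exact_mod_cast this
  rcases eq_zero_or_eq_zero_of_sq_add_three_mul_sq hcast with rfl | rfl
  · left
    simp [hS]
  · right
    refine ⟨u, ?_, j, hj, by simpa using hcast⟩
    rw [hS]
    apply Complex.ext <;> simp

/-- The number of nonzero forms with exponential sum `v`. -/
noncomputable def formCount (K : Type*) [Field K] [Fintype K] [Algebra (ZMod 3) K] (v : ℂ) : ℕ :=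
  {t : K × K × K | t ≠ 0 ∧ formSum t = v}.ncard

lemma formCount_eq_sum [DecidableEq K] (v : ℂ) :
    (formCount K v : ℝ) = ∑ t ∈ univ.erase (0 : K × K × K), if formSum t = v then 1 else 0 := by
  rw [formCount, Finset.sum_boole, Nat.cast_inj, ← Set.ncard_coe_finset]
  congr 1
  ext t
  simp

lemma formSum_zero : formSum (0 : K × K × K) = Fintype.card K := by
  simp [formSum, frobeniusForm]

/-- In even degree the real part of the fifth power of a sum is read off from its value. -/
lemma formSum_pow_five_re {h : ℕ} (hK : Module.finrank (ZMod 3) K = 2 * h) {t : K × K × K}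
    (ht : t ≠ 0) :
    (formSum t ^ 5).re = (3 ^ h) ^ 5 *
      (((if formSum t = 3 ^ h then 1 else 0) - (if formSum t = -3 ^ h then 1 else 0)) +
        3 ^ 5 * ((if formSum t = 3 ^ (h + 1) then 1 else 0) -
          (if formSum t = -3 ^ (h + 1) then 1 else 0)) +
        3 ^ 10 * ((if formSum t = 3 ^ (h + 2) then 1 else 0) -
          (if formSum t = -3 ^ (h + 2) then 1 else 0))) := by
  have hpos : ∀ n : ℕ, (0 : ℤ) < 3 ^ n := fun n ↦ by positivity
  rcases formSum_re_eq_zero_or ht with hre | ⟨u, hu, j, hj, hsq⟩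
  · have hne : ∀ v : ℤ, v ≠ 0 → formSum t ≠ v := fun v hv hS ↦ by
      rw [hS, Complex.intCast_re] at hre
      exact hv (by exact_mod_cast hre)
    have hplus : ∀ n : ℕ, formSum t ≠ 3 ^ n := fun n ↦ by
      simpa using hne (3 ^ n) (hpos n).ne'
    have hminus : ∀ n : ℕ, formSum t ≠ -3 ^ n := fun n ↦ by
      simpa using hne (-3 ^ n) (neg_ne_zero.2 (hpos n).ne')
    have hS : formSum t = (formSum t).im * I := by
      apply Complex.ext <;> simp [hre]
    simp only [hplus, hminus, if_false]
    rw [hS, mul_pow, show I ^ 5 = I by rw [pow_succ, I_pow_four, one_mul], ← Complex.ofReal_pow,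
      Complex.re_ofReal_mul, Complex.I_re]
    simp
  · have hplus : ∀ n : ℕ, formSum t = 3 ^ n ↔ u = 3 ^ n := fun n ↦ by
      rw [hu]
      exact_mod_cast Iff.rfl
    have hminus : ∀ n : ℕ, formSum t = -3 ^ n ↔ u = -3 ^ n := fun n ↦ by
      rw [hu]
      exact_mod_cast Iff.rfl
    have hre : (formSum t ^ 5).re = (u : ℝ) ^ 5 := by
      rw [hu, ← Int.cast_pow, Complex.intCast_re, Int.cast_pow]
    simp only [hplus, hminus, hre]
    have hval : u = 3 ^ h ∨ u = -3 ^ h ∨ u = 3 ^ (h + 1) ∨ u = -3 ^ (h + 1) ∨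
        u = 3 ^ (h + 2) ∨ u = -3 ^ (h + 2) := by
      have hodd : ∀ n : ℕ, u ^ 2 ≠ 3 ^ (2 * n + 1) := fun n hn ↦ by
        have h3 : (3 : ℕ) ^ (2 * n + 1) = u.natAbs ^ 2 := by
          zify
          rw [sq_abs, hn]
        have h4 := congrArg (fun a ↦ a.factorization 3) h3
        simp only [Nat.factorization_pow, Nat.prime_three.factorization] at h4
        simp at h4
        omega
      have heq : ∀ n : ℕ, u ^ 2 = 3 ^ (2 * n) → u = 3 ^ n ∨ u = -3 ^ n := fun n hn ↦
        sq_eq_sq_iff_eq_or_eq_neg.1 (by rw [hn, ← pow_mul, mul_comm])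
      rw [hK] at hsq
      interval_cases j
      · have := heq h hsq
        tauto
      · exact absurd hsq (hodd h)
      · have := heq (h + 1) hsq
        tauto
      · exact absurd hsq (hodd (h + 1))
      · have := heq (h + 2) hsq
        tauto
    have hP := hpos h
    simp only [pow_succ (3 : ℤ) h, pow_succ (3 : ℤ) (h + 1)] at hval ⊢
    have hPR : ((3 ^ h : ℤ) : ℝ) = 3 ^ h := by push_cast; rfl
    generalize (3 ^ h : ℤ) = P at hval hP hPR ⊢
    rw [← hPR]
    rcases hval with rfl | rfl | rfl | rfl | rfl | rfl <;>
      split_ifs <;> first | omega | (push_cast; ring)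

/-- The fifth moment of the exponential sums expressed by their value distribution. -/
lemma formCount_identity {h : ℕ} (hK : Module.finrank (ZMod 3) K = 2 * h) :
    ((formCount K (3 ^ h) : ℤ) - formCount K (-3 ^ h)) +
        3 ^ 5 * ((formCount K (3 ^ (h + 1)) : ℤ) - formCount K (-3 ^ (h + 1))) +
        3 ^ 10 * ((formCount K (3 ^ (h + 2)) : ℤ) - formCount K (-3 ^ (h + 2))) =
      (40 * (3 ^ (2 * h) - 1) * (3 ^ (2 * h) - 2) + 1 - (3 ^ (2 * h)) ^ 2) * 3 ^ h := by
  classical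
  have hq : Fintype.card K = 3 ^ (2 * h) := by
    rw [Module.card_eq_pow_finrank (K := ZMod 3) (V := K), ZMod.card, hK]
  have hM := card_power_sum_system (K := K)
  have hsum := sum_formSum_pow_five (K := K)
  rw [← Finset.add_sum_erase _ _ (mem_univ (0 : K × K × K)), formSum_zero] at hsum
  rw [hq] at hM hsum
  set M := #{x : Fin 5 → K | ∑ i, x i ^ 2 = 0 ∧ ∑ i, x i ^ 4 = 0 ∧ ∑ i, x i ^ 10 = 0}
  have hre := congrArg Complex.re hsum
  rw [Complex.add_re, Complex.re_sum, Finset.sum_congr rfl fun t ht ↦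
    formSum_pow_five_re hK (Finset.ne_of_mem_erase ht), ← Finset.mul_sum] at hre
  simp only [Finset.sum_add_distrib, ← Finset.mul_sum, Finset.sum_sub_distrib,
    ← formCount_eq_sum] at hre
  have hre' : ((3 : ℝ) ^ (2 * h)) ^ 5 + (3 ^ h) ^ 5 *
      (((formCount K (3 ^ h) : ℝ) - formCount K (-3 ^ h)) +
        3 ^ 5 * ((formCount K (3 ^ (h + 1)) : ℝ) - formCount K (-3 ^ (h + 1))) +
        3 ^ 10 * ((formCount K (3 ^ (h + 2)) : ℝ) - formCount K (-3 ^ (h + 2)))) =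
      ((3 : ℝ) ^ (2 * h)) ^ 3 * M := by
    convert hre using 1
    · congr 1
      exact_mod_cast (Complex.natCast_re ((3 ^ (2 * h)) ^ 5)).symm
    · exact_mod_cast (Complex.natCast_re ((3 ^ (2 * h)) ^ 3 * M)).symm
  have hcast : ((3 : ℤ) ^ (2 * h)) ^ 5 + (3 ^ h) ^ 5 *
      (((formCount K (3 ^ h) : ℤ) - formCount K (-3 ^ h)) +
        3 ^ 5 * ((formCount K (3 ^ (h + 1)) : ℤ) - formCount K (-3 ^ (h + 1))) +
        3 ^ 10 * ((formCount K (3 ^ (h + 2)) : ℤ) - formCount K (-3 ^ (h + 2)))) =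
      ((3 : ℤ) ^ (2 * h)) ^ 3 * M := by
    exact_mod_cast hre'
  have hpow : (3 : ℤ) ^ (2 * h) = (3 ^ h) ^ 2 := by rw [← pow_mul, mul_comm]
  refine mul_left_cancel₀ (pow_ne_zero 5 (pow_ne_zero h (three_ne_zero (α := ℤ)))) ?_
  push_cast at hM
  rw [hM] at hcast
  rw [hpow] at hcast ⊢
  linear_combination hcast

end QuadraticCharSum

lemma nn_eq_formCount (m : ℕ) [Fintype (GaloisField 3 m)] (ε : ℤ) (j : ℕ) :
    nn 3 m ε j = formCount (GaloisField 3 m) (nval 3 m ε j) := by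
  have hS : ∀ t : GaloisField 3 m × GaloisField 3 m × GaloisField 3 m,
      expSum 3 m t.1 t.2.1 t.2.2 = formSum t := fun t ↦ by
    unfold expSum formSum
    refine Finset.sum_congr (by ext; simp) fun x _ ↦ ?_
    rw [traceChar_apply, ZMod.stdAddChar_apply, ZMod.toCircle_apply]
    rfl
  simp only [nn, formCount, hS]
  rfl

lemma nval_three_of_even (h l : ℕ) (ε : ℤ) : nval 3 (2 * h) ε (2 * l) = ε * 3 ^ (h + l) := by
  have hsqrt : √(((3 : ℕ) : ℝ) ^ (2 * h + 2 * l)) = 3 ^ (h + l) := by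
    rw [← mul_add, mul_comm, pow_mul, Real.sqrt_sq (by positivity)]
    norm_num
  rw [nval, if_pos (by omega), hsqrt]
  push_cast
  rfl

theorem fifth_moment_identity (m : ℕ) (hm : 0 < m) (hme : Even m) :
    letI : Fact (Nat.Prime 3) := ⟨by norm_num⟩
    (nn 3 m 1 0 : ℤ) - nn 3 m (-1) 0 +
      (3 : ℤ) ^ 5 * ((nn 3 m 1 2 : ℤ) - nn 3 m (-1) 2) +
      (3 : ℤ) ^ 10 * ((nn 3 m 1 4 : ℤ) - nn 3 m (-1) 4) =
      (5 * ((3 : ℤ) ^ m - 1) * (8 * (3 : ℤ) ^ m - 2 * 3 - 10) - (3 : ℤ) ^ (2 * m) + 1) *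
        (3 : ℤ) ^ (m / 2) := by
  obtain ⟨h, rfl⟩ := hme.exists_two_nsmul
  rw [smul_eq_mul] at hm ⊢
  let _ : Fintype (GaloisField 3 (2 * h)) := Fintype.ofFinite _
  have key := formCount_identity (K := GaloisField 3 (2 * h)) (GaloisField.finrank 3 hm.ne')
  have h₀ := nval_three_of_even h 0
  have h₁ := nval_three_of_even h 1
  have h₂ := nval_three_of_even h 2
  simp only [mul_zero, mul_one, add_zero] at h₀ h₁
  norm_num only at h₂
  simp only [nn_eq_formCount, h₀, h₁, h₂, Int.cast_one, Int.cast_neg, one_mul, neg_mul]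
  rw [key, Nat.mul_div_cancel_left _ two_pos, mul_comm 2 (2 * h), pow_mul 3 (2 * h) 2]
  ring
end

section
/- Let p be an odd prime with p ≡ 3 (mod 4), m a positive integer, and q = p^m. Then Σ_{(α,β,γ) ∈ F_q³} S(α,β,γ)² = p^{3m}. -/
open Complex Finset

/-- The canonical additive character of `GaloisField p m`. -/
noncomputable def traceAddChar (p m : ℕ) [Fact p.Prime] : AddChar (GaloisField p m) ℂ :=
  (ZMod.stdAddChar (N := p)).compAddMonoidHom
    (Algebra.trace (ZMod p) (GaloisField p m)).toAddMonoidHom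

lemma traceAddChar_apply (p m : ℕ) [Fact p.Prime] (x : GaloisField p m) :
    traceAddChar p m x = zetaPow p (Algebra.trace (ZMod p) (GaloisField p m) x) := by
  change ZMod.stdAddChar (N := p) (Algebra.trace (ZMod p) (GaloisField p m) x) = _
  rw [ZMod.stdAddChar_apply, ZMod.toCircle_apply, zetaPow]

lemma isPrimitive_traceAddChar (p m : ℕ) [Fact p.Prime] : (traceAddChar p m).IsPrimitive := by
  apply AddChar.IsPrimitive.of_ne_one
  obtain ⟨x, hx⟩ := Algebra.trace_surjective (ZMod p) (GaloisField p m) 1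
  intro h
  have h1 : ZMod.stdAddChar (N := p) (Algebra.trace (ZMod p) (GaloisField p m) x) = 1 :=
    DFunLike.congr_fun h x
  rw [hx, ← AddChar.map_zero_eq_one (ZMod.stdAddChar (N := p))] at h1
  exact one_ne_zero (ZMod.injective_stdAddChar h1)

/-- When `p ≡ 3 mod 4`, the forms `x ^ 2 + y ^ 2` and `x ^ (p + 1) + y ^ (p + 1)` have no common
nontrivial zero over a field in which `2 ≠ 0`. -/
lemma sq_add_sq_and_pow_add_pow_eq_zero_iff {K : Type*} [Field K] (h2 : (2 : K) ≠ 0) {p : ℕ}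
    (hp4 : p % 4 = 3) (x y : K) :
    x ^ 2 + y ^ 2 = 0 ∧ x ^ (p + 1) + y ^ (p + 1) = 0 ↔ x = 0 ∧ y = 0 := by
  constructor
  · rintro ⟨hA, hB⟩
    obtain ⟨k, hk⟩ : ∃ k, p + 1 = 2 * (2 * (k + 1)) := ⟨p / 4, by omega⟩
    have hy : y ^ 2 = -x ^ 2 := by linear_combination hA
    have hx : x = 0 := by
      rw [hk, pow_mul y, hy, pow_mul (-x ^ 2), neg_sq, ← pow_mul, ← pow_mul, ← mul_assoc,
        ← two_mul] at hB
      exact eq_zero_of_pow_eq_zero ((mul_eq_zero.mp hB).resolve_left h2)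
    refine ⟨hx, ?_⟩
    simpa [hx] using hy
  · rintro ⟨rfl, rfl⟩
    simp

theorem sum_S_second_moment (p : ℕ) [Fact p.Prime] (hp4 : p % 4 = 3)
    (m : ℕ) (hm : 0 < m) :
    letI : Fintype (GaloisField p m) := Fintype.ofFinite _
    ∑ t : GaloisField p m × GaloisField p m × GaloisField p m,
      (expSum p m t.1 t.2.1 t.2.2) ^ 2 = (p : ℂ) ^ (3 * m) := by
  classical
  let _ : Fintype (GaloisField p m) := Fintype.ofFinite _
  change ∑ t : GaloisField p m × GaloisField p m × GaloisField p m,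
      (expSum p m t.1 t.2.1 t.2.2) ^ 2 = (p : ℂ) ^ (3 * m)
  set ψ := traceAddChar p m
  have hψ : ψ.IsPrimitive := isPrimitive_traceAddChar p m
  have hcard : (Fintype.card (GaloisField p m) : ℂ) = (p : ℂ) ^ m := by
    rw [← Nat.card_eq_fintype_card, GaloisField.card p m hm.ne', Nat.cast_pow]
  have h2 : (2 : GaloisField p m) ≠ 0 := by
    apply Ring.two_ne_zero
    rw [ringChar.eq (GaloisField p m) p]
    omega
  have hsq (t : GaloisField p m × GaloisField p m × GaloisField p m) :
      expSum p m t.1 t.2.1 t.2.2 ^ 2 = ∑ x, ∑ y, ψ (t.1 * (x ^ 2 + y ^ 2)) *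
        (ψ (t.2.1 * (x ^ (p + 1) + y ^ (p + 1))) *
          ψ (t.2.2 * (x ^ (p ^ 2 + 1) + y ^ (p ^ 2 + 1)))) := by
    rw [sq, expSum]
    simp_rw [← traceAddChar_apply]
    rw [Finset.sum_mul_sum]
    refine Finset.sum_congr rfl fun x _ ↦ Finset.sum_congr rfl fun y _ ↦ ?_
    simp only [ψ, ← AddChar.map_add_eq_mul]
    congr 1
    ring
  have hinner (x y : GaloisField p m) :
      ∑ t : GaloisField p m × GaloisField p m × GaloisField p m, ψ (t.1 * (x ^ 2 + y ^ 2)) *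
        (ψ (t.2.1 * (x ^ (p + 1) + y ^ (p + 1))) *
          ψ (t.2.2 * (x ^ (p ^ 2 + 1) + y ^ (p ^ 2 + 1)))) =
      if x = 0 then if y = 0 then (p : ℂ) ^ (3 * m) else 0 else 0 := by
    simp_rw [Fintype.sum_prod_type, ← Finset.mul_sum, ← Finset.sum_mul,
      AddChar.sum_mulShift _ hψ, ← ite_and]
    by_cases hxy : x = 0 ∧ y = 0
    · obtain ⟨rfl, rfl⟩ := hxy
      simp only [zero_pow (Nat.succ_ne_zero _), add_zero, if_true, and_self, hcard]
      ring
    · rw [if_neg hxy]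
      rw [← sq_add_sq_and_pow_add_pow_eq_zero_iff h2 hp4, not_and_or] at hxy
      rcases hxy with h | h <;> simp [h]
  simp_rw [hsq]
  rw [Finset.sum_comm]
  simp_rw [Finset.sum_comm (s := (Finset.univ :
    Finset (GaloisField p m × GaloisField p m × GaloisField p m))), hinner]
  simp
end

section
/- Let p be an odd prime with p ≡ 3 (mod 4), m a positive integer, and q = p^m. Then Σ_{(α,β,γ) ∈ F_q³} S(α,β,γ)³ = ((p+1)(p^m − 1) + 1)·p^{3m}. -/
open Complex Finset

/-- Orthogonality of characters: the third moment of a family of exponential sums with three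
parameters counts the common zeros of the corresponding diagonal system. -/
theorem AddChar.sum_sum_pow_three {F : Type*} [Field F] [Fintype F] [DecidableEq F]
    {ψ : AddChar F ℂ} (hψ : ψ.IsPrimitive) (f g h : F → F) :
    ∑ t : F × F × F, (∑ x, ψ (t.1 * f x + t.2.1 * g x + t.2.2 * h x)) ^ 3 =
      (#{v : F × F × F | f v.1 + f v.2.1 + f v.2.2 = 0 ∧ g v.1 + g v.2.1 + g v.2.2 = 0 ∧
        h v.1 + h v.2.1 + h v.2.2 = 0} : ℂ) * (Fintype.card F : ℂ) ^ 3 := by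
  have expand (t : F × F × F) : (∑ x, ψ (t.1 * f x + t.2.1 * g x + t.2.2 * h x)) ^ 3 =
      ∑ v : F × F × F, ψ (t.1 * (f v.1 + f v.2.1 + f v.2.2)) *
        (ψ (t.2.1 * (g v.1 + g v.2.1 + g v.2.2)) *
          ψ (t.2.2 * (h v.1 + h v.2.1 + h v.2.2))) := by
    rw [pow_three, Fintype.sum_mul_sum, Fintype.sum_mul_sum, Fintype.sum_prod_type]
    refine Finset.sum_congr rfl fun x _ => ?_
    rw [Fintype.sum_prod_type]
    refine Finset.sum_congr rfl fun y _ => ?_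
    rw [Finset.mul_sum]
    refine Finset.sum_congr rfl fun z _ => ?_
    simp only [← AddChar.map_add_eq_mul]
    congr 1
    ring
  simp_rw [expand]
  rw [Finset.sum_comm, Finset.card_filter, Nat.cast_sum, Finset.sum_mul]
  refine Finset.sum_congr rfl fun v _ => ?_
  rw [Fintype.sum_prod_type]
  simp_rw [Fintype.sum_prod_type, ← Finset.mul_sum, ← Finset.sum_mul, AddChar.sum_mulShift _ hψ]
  split_ifs <;> simp_all [pow_three]

/-- The number of points on the affine conic `a² + b² = -1` over a finite field of odd
characteristic. -/
theorem FiniteField.card_sq_add_sq_eq_neg_one {F : Type*} [Field F] [Fintype F] [DecidableEq F]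
    (hF : ringChar F ≠ 2) :
    (#{v : F × F | v.1 ^ 2 + v.2 ^ 2 = -1} : ℤ) = Fintype.card F - quadraticChar F (-1) := by
  have fibers : (#{v : F × F | v.1 ^ 2 + v.2 ^ 2 = -1} : ℤ) =
      ∑ u : F, (quadraticChar F u + 1) * (quadraticChar F (-1 - u) + 1) := by
    rw [Finset.card_eq_sum_card_fiberwise (f := fun v => v.1 ^ 2) (t := Finset.univ)
      (fun _ _ => by simp)]
    push_cast
    refine Finset.sum_congr rfl fun u _ => ?_
    rw [← quadraticChar_card_sqrts hF, ← quadraticChar_card_sqrts hF, ← Nat.cast_mul,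
      ← Finset.card_product]
    congr 2
    ext ⟨a, b⟩
    simp only [Finset.mem_filter, Finset.mem_univ, true_and, Finset.mem_product,
      Set.mem_toFinset, Set.mem_ofPred_eq]
    constructor
    · rintro ⟨h, rfl⟩
      exact ⟨rfl, by linear_combination h⟩
    · rintro ⟨rfl, h⟩
      exact ⟨by linear_combination h, rfl⟩
  have shift : ∑ u : F, quadraticChar F (-1 - u) = 0 :=
    ((Equiv.subLeft (-1 : F)).sum_comp fun u => quadraticChar F u).trans
      (quadraticChar_sum_zero hF)
  have jacobi : ∑ u : F, quadraticChar F u * quadraticChar F (-1 - u) =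
      -quadraticChar F (-1) := by
    rw [← jacobiSum_nontrivial_inv (quadraticChar_ne_one hF), jacobiSum,
      (quadraticChar_isQuadratic F).inv, ← Equiv.sum_comp (Equiv.neg F)]
    refine Finset.sum_congr rfl fun u _ => ?_
    rw [← map_mul, ← map_mul, Equiv.neg_apply]
    congr 1
    ring
  have distrib (u : F) : (quadraticChar F u + 1) * (quadraticChar F (-1 - u) + 1) =
      quadraticChar F u * quadraticChar F (-1 - u) + quadraticChar F u +
        quadraticChar F (-1 - u) + 1 := by ring
  simp_rw [fibers, distrib, Finset.sum_add_distrib, shift, jacobi, quadraticChar_sum_zero hF]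
  simp only [Finset.sum_const, Finset.card_univ, nsmul_eq_mul, mul_one]
  ring

/-- Over `ZMod p` with `p ≡ 3 (mod 4)` the affine conic `a² + b² = -1` has `p + 1` points. -/
theorem ZMod.card_sq_add_sq_eq_neg_one (p : ℕ) [Fact p.Prime] (hp : p % 4 = 3) :
    #{v : ZMod p × ZMod p | v.1 ^ 2 + v.2 ^ 2 = -1} = p + 1 := by
  have hchar : ringChar (ZMod p) ≠ 2 := by rw [ZMod.ringChar_zmod_n]; omega
  have h := FiniteField.card_sq_add_sq_eq_neg_one (F := ZMod p) hchar
  rw [quadraticChar_neg_one hchar, ZMod.card, ZMod.χ₄_nat_three_mod_four hp] at h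
  omega

/-- An element fixed by Frobenius comes from the prime field. -/
theorem ZMod.exists_algebraMap_eq_of_pow_eq_self {p : ℕ} [Fact p.Prime] {F : Type*} [Field F]
    [Algebra (ZMod p) F] {a : F} (ha : a ^ p = a) : ∃ c : ZMod p, algebraMap (ZMod p) F c = a := by
  have : CharP F p := charP_of_injective_algebraMap (algebraMap (ZMod p) F).injective p
  obtain ⟨n, hn⟩ := (mem_bot_iff_intCast p F).1 ((Subfield.mem_bot_iff_pow_eq_self F p).2 ha)
  exact ⟨n, by simpa using hn⟩

/-- A point of the conic `a² + b² = -1` which is orthogonal to its Frobenius conjugate is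
fixed by Frobenius. -/
theorem pow_char_eq_self_of_sq_add_sq {p : ℕ} [Fact p.Prime] {F : Type*} [Field F] [CharP F p]
    (hp : Odd p) {a b : F} (h : a ^ 2 + b ^ 2 = -1) (hfrob : a ^ (p + 1) + b ^ (p + 1) = -1) :
    a ^ p = a := by
  have conj : (a ^ p) ^ 2 + (b ^ p) ^ 2 = -1 := by
    rw [← pow_mul, ← pow_mul, mul_comm p 2, pow_mul, pow_mul, ← add_pow_char, h, hp.neg_one_pow]
  rw [pow_succ, pow_succ] at hfrob
  have det : a * b ^ p - b * a ^ p = 0 := by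
    refine pow_eq_zero_iff two_ne_zero |>.1 ?_
    linear_combination (a ^ p * a ^ p + b ^ p * b ^ p) * h - conj
      - (a ^ p * a + b ^ p * b - 1) * hfrob
  linear_combination b * det - a * hfrob + a ^ p * h

/-- For `p ≡ 3 (mod 4)` the plane `z = 0` contains no nonzero isotropic vector orthogonal to its
Frobenius conjugate. -/
theorem eq_zero_of_sq_add_sq_of_pow_add_pow {p : ℕ} (hp : p % 4 = 3) {F : Type*} [Field F]
    (h2 : (2 : F) ≠ 0) {x y : F} (h : x ^ 2 + y ^ 2 = 0) (hfrob : x ^ (p + 1) + y ^ (p + 1) = 0) :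
    y = 0 := by
  obtain ⟨k, hk⟩ : ∃ k, p + 1 = 2 * (2 * k) := ⟨(p + 1) / 4, by omega⟩
  have hx : x ^ (p + 1) = y ^ (p + 1) := by
    rw [hk, pow_mul x, pow_mul y, eq_neg_of_add_eq_zero_left h, (even_two_mul k).neg_pow]
  rw [hx, ← two_mul, mul_eq_zero, or_iff_right h2] at hfrob
  exact eq_zero_of_pow_eq_zero hfrob

/-- For `p ≡ 3 (mod 4)` the nonzero vectors of `F³` orthogonal to their first Frobenius conjugates
are the multiples of the points of the conic `a² + b² + 1 = 0` over the prime field. -/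
theorem card_isotropic_frobenius {p : ℕ} [Fact p.Prime] (hp : p % 4 = 3) {F : Type*} [Field F]
    [Fintype F] [DecidableEq F] [Algebra (ZMod p) F] :
    #{v : F × F × F | v.1 ^ 2 + v.2.1 ^ 2 + v.2.2 ^ 2 = 0 ∧
      v.1 ^ (p + 1) + v.2.1 ^ (p + 1) + v.2.2 ^ (p + 1) = 0 ∧
      v.1 ^ (p ^ 2 + 1) + v.2.1 ^ (p ^ 2 + 1) + v.2.2 ^ (p ^ 2 + 1) = 0} =
    (p + 1) * (Fintype.card F - 1) + 1 := by
  have : CharP F p := charP_of_injective_algebraMap (algebraMap (ZMod p) F).injective p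
  have hodd : Odd p := Nat.odd_iff.2 (by omega)
  have h2 : (2 : F) ≠ 0 := Ring.two_ne_zero (by rw [ringChar.eq F p]; omega)
  let param : Fˣ × ZMod p × ZMod p → F × F × F := fun w =>
    (algebraMap (ZMod p) F w.2.1 * w.1, algebraMap (ZMod p) F w.2.2 * w.1, w.1)
  have param_injective : Function.Injective param := by
    rintro ⟨z, a, b⟩ ⟨w, c, d⟩ h
    simp only [param, Prod.mk.injEq, Units.val_inj] at h
    obtain ⟨ha, hb, rfl⟩ := h
    rw [mul_left_inj' z.ne_zero, (algebraMap (ZMod p) F).injective.eq_iff] at ha hb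
    rw [ha, hb]
  have solutions : ({v : F × F × F | v.1 ^ 2 + v.2.1 ^ 2 + v.2.2 ^ 2 = 0 ∧
      v.1 ^ (p + 1) + v.2.1 ^ (p + 1) + v.2.2 ^ (p + 1) = 0 ∧
      v.1 ^ (p ^ 2 + 1) + v.2.1 ^ (p ^ 2 + 1) + v.2.2 ^ (p ^ 2 + 1) = 0} : Finset (F × F × F)) =
      insert 0 (((Finset.univ : Finset Fˣ) ×ˢ
        ({v | v.1 ^ 2 + v.2 ^ 2 = -1} : Finset (ZMod p × ZMod p))).image param) := by
    ext ⟨x, y, z⟩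
    simp only [Finset.mem_filter, Finset.mem_univ, true_and, Finset.mem_insert, Finset.mem_image,
      Finset.mem_product, Prod.exists, param, Prod.mk.injEq, Prod.mk_eq_zero]
    constructor
    · rintro ⟨hsq, hfrob, -⟩
      rcases eq_or_ne z 0 with rfl | hz
      · simp only [ne_eq, OfNat.ofNat_ne_zero, not_false_eq_true, zero_pow, add_zero,
          Nat.succ_ne_zero] at hsq hfrob
        exact .inl ⟨eq_zero_of_sq_add_sq_of_pow_add_pow hp h2 ((add_comm _ _).trans hsq)
          ((add_comm _ _).trans hfrob), eq_zero_of_sq_add_sq_of_pow_add_pow hp h2 hsq hfrob, rfl⟩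
      · have normalize {n : ℕ} (h : x ^ n + y ^ n + z ^ n = 0) :
            (x / z) ^ n + (y / z) ^ n = -1 := by
          rw [div_pow, div_pow, ← add_div, div_eq_iff (pow_ne_zero n hz)]
          linear_combination h
        have hsq' := normalize hsq
        have hfrob' := normalize hfrob
        obtain ⟨a, ha⟩ := ZMod.exists_algebraMap_eq_of_pow_eq_self (p := p)
          (pow_char_eq_self_of_sq_add_sq hodd hsq' hfrob')
        obtain ⟨b, hb⟩ := ZMod.exists_algebraMap_eq_of_pow_eq_self (p := p)
          (pow_char_eq_self_of_sq_add_sq hodd ((add_comm _ _).trans hsq')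
            ((add_comm _ _).trans hfrob'))
        refine .inr ⟨Units.mk0 z hz, a, b, (algebraMap (ZMod p) F).injective ?_, ?_, ?_, rfl⟩
        · simpa [ha, hb] using hsq'
        · rw [ha, Units.val_mk0, div_mul_cancel₀ _ hz]
        · rw [hb, Units.val_mk0, div_mul_cancel₀ _ hz]
    · rintro (⟨rfl, rfl, rfl⟩ | ⟨z, a, b, hab, rfl, rfl, rfl⟩)
      · simp
      · have scale {n : ℕ} (ha : a ^ n = a) (hb : b ^ n = b) :
            (algebraMap (ZMod p) F a * z) ^ (n + 1) + (algebraMap (ZMod p) F b * z) ^ (n + 1) +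
              (z : F) ^ (n + 1) = 0 := by
          have key : algebraMap (ZMod p) F a ^ (n + 1) + algebraMap (ZMod p) F b ^ (n + 1) = -1 := by
            rw [← map_pow, ← map_pow, ← map_add, pow_succ, pow_succ, ha, hb, ← sq, ← sq, hab,
              map_neg, map_one]
          rw [mul_pow, mul_pow]
          linear_combination (z : F) ^ (n + 1) * key
        exact ⟨scale (pow_one a) (pow_one b), scale (ZMod.pow_card a) (ZMod.pow_card b),
          scale (ZMod.pow_card_pow a) (ZMod.pow_card_pow b)⟩
  rw [solutions, Finset.card_insert_of_notMem, Finset.card_image_of_injective _ param_injective,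
    Finset.card_product, ZMod.card_sq_add_sq_eq_neg_one p hp, Finset.card_univ,
    Fintype.card_units, mul_comm]
  simp [param]

/-- `zetaPow` is the standard additive character of `ZMod p`. -/
theorem zetaPow_eq_stdAddChar (p : ℕ) [NeZero p] (a : ZMod p) :
    zetaPow p a = ZMod.stdAddChar a := by
  rw [ZMod.stdAddChar_apply, ZMod.toCircle_apply, zetaPow]

/-- The standard additive character composed with the trace is primitive. -/
theorem isPrimitive_stdAddChar_comp_trace (p : ℕ) [Fact p.Prime] (F : Type*) [Field F] [Finite F]
    [Algebra (ZMod p) F] :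
    ((ZMod.stdAddChar (N := p)).compAddMonoidHom
      (Algebra.trace (ZMod p) F).toAddMonoidHom).IsPrimitive := by
  refine AddChar.IsPrimitive.of_ne_one (AddChar.ne_one_iff.2 ?_)
  obtain ⟨x, hx⟩ := Algebra.trace_surjective (ZMod p) F 1
  refine ⟨x, fun h => one_ne_zero (α := ZMod p) (ZMod.injective_stdAddChar ?_)⟩
  rw [AddChar.map_zero_eq_one, ← h, ← hx]
  rfl

theorem sum_S_third_moment (p : ℕ) [Fact p.Prime] (hp4 : p % 4 = 3)
    (m : ℕ) (hm : 0 < m) :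
    letI : Fintype (GaloisField p m) := Fintype.ofFinite _
    ∑ t : GaloisField p m × GaloisField p m × GaloisField p m,
      (expSum p m t.1 t.2.1 t.2.2) ^ 3 =
        (((p : ℂ) + 1) * ((p : ℂ) ^ m - 1) + 1) * (p : ℂ) ^ (3 * m) := by
  classical
  let : Fintype (GaloisField p m) := Fintype.ofFinite _
  have hcard : Fintype.card (GaloisField p m) = p ^ m := by
    rw [← Nat.card_eq_fintype_card, GaloisField.card p m hm.ne']
  have moment := AddChar.sum_sum_pow_three
    (isPrimitive_stdAddChar_comp_trace p (GaloisField p m))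
    (fun x => x ^ 2) (fun x => x ^ (p + 1)) (fun x => x ^ (p ^ 2 + 1))
  rw [card_isotropic_frobenius hp4, hcard] at moment
  simp only [expSum, zetaPow_eq_stdAddChar]
  refine moment.trans ?_
  push_cast [Nat.cast_sub (Nat.one_le_pow m p (Fact.out : p.Prime).pos)]
  ring
end

section
/- Let p = 3, m a positive integer, and q = 3^m. Then the number of 4-tuples (x,y,z,w) ∈ F_q⁴ satisfying x²+y²+z²+w² = 0, x⁴+y⁴+z⁴+w⁴ = 0, and x^{10}+y^{10}+z^{10}+w^{10} = 0 equals 8(3^m − 1)² + 1. -/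
section

variable {F : Type*} [Field F] [Fintype F] [DecidableEq F]

/-- The elements with the same square as `a`. -/
def squareFiber (a : F) : Finset F := {z | z ^ 2 = a ^ 2}

/-- The pairs `(z, w)` with `{z ^ 2, w ^ 2} = {a ^ 2, b ^ 2}` as multisets. -/
def squarePairs (a b : F) : Finset (F × F) :=
  squareFiber a ×ˢ squareFiber b ∪ squareFiber b ×ˢ squareFiber a

lemma mem_squareFiber {a z : F} : z ∈ squareFiber a ↔ z ^ 2 = a ^ 2 := by
  simp [squareFiber]

lemma mem_squarePairs {a b : F} {u : F × F} : u ∈ squarePairs a b ↔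
    (u.1 ^ 2 = a ^ 2 ∧ u.2 ^ 2 = b ^ 2) ∨ (u.1 ^ 2 = b ^ 2 ∧ u.2 ^ 2 = a ^ 2) := by
  simp [squarePairs, mem_squareFiber]

lemma card_squareFiber_zero : (squareFiber (0 : F)).card = 1 := by
  simp [squareFiber, Finset.filter_eq']

lemma card_squareFiber_of_ne_zero (h2 : (2 : F) ≠ 0) {a : F} (ha : a ≠ 0) :
    (squareFiber a).card = 2 := by
  have h : squareFiber a = {a, -a} := by
    ext z
    simp [mem_squareFiber, sq_eq_sq_iff_eq_or_eq_neg]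
  rw [h, Finset.card_pair]
  intro h
  have : (2 : F) * a = 0 := by linear_combination h
  exact mul_ne_zero h2 ha this

lemma sum_card_squareFiber_pow (h2 : (2 : F) ≠ 0) (k : ℕ) :
    ∑ a : F, (squareFiber a).card ^ k = 1 + (Fintype.card F - 1) * 2 ^ k := by
  rw [← Finset.add_sum_erase _ _ (Finset.mem_univ (0 : F)), card_squareFiber_zero, one_pow,
    Finset.sum_congr rfl fun a ha => by
      rw [card_squareFiber_of_ne_zero h2 (Finset.ne_of_mem_erase ha)]]
  simp

lemma card_squarePairs_add (a b : F) :
    (squarePairs a b).card + (if b ^ 2 = a ^ 2 then (squareFiber a).card ^ 2 else 0) =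
      2 * ((squareFiber a).card * (squareFiber b).card) := by
  split_ifs with h
  · have hab : squareFiber b = squareFiber a := by
      ext z
      simp [mem_squareFiber, h]
    rw [squarePairs, hab, Finset.union_self, Finset.card_product]
    ring
  · rw [squarePairs, Finset.card_union_of_disjoint, Finset.card_product, Finset.card_product]
    · ring
    · rw [Finset.disjoint_left]
      rintro ⟨z, w⟩ hz hw
      simp only [Finset.mem_product, mem_squareFiber] at hz hw
      exact h (hw.1.symm.trans hz.1)

lemma sum_card_squarePairs (h2 : (2 : F) ≠ 0) :
    ∑ p : F × F, (squarePairs p.1 p.2).card = 8 * (Fintype.card F - 1) ^ 2 + 1 := by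
  have key : ∑ p : F × F, ((squarePairs p.1 p.2).card +
      (if p.2 ^ 2 = p.1 ^ 2 then (squareFiber p.1).card ^ 2 else 0)) =
      ∑ p : F × F, 2 * ((squareFiber p.1).card * (squareFiber p.2).card) :=
    Finset.sum_congr rfl fun p _ => card_squarePairs_add p.1 p.2
  have hdiag : ∑ p : F × F, (if p.2 ^ 2 = p.1 ^ 2 then (squareFiber p.1).card ^ 2 else 0) =
      ∑ a : F, (squareFiber a).card ^ 3 := by
    rw [Fintype.sum_prod_type]
    refine Finset.sum_congr rfl fun a _ => ?_
    dsimp only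
    rw [← Finset.sum_filter, Finset.sum_const, smul_eq_mul, pow_succ' _ 2]
    rfl
  have hprod : ∑ p : F × F, 2 * ((squareFiber p.1).card * (squareFiber p.2).card) =
      2 * (∑ a : F, (squareFiber a).card ^ 1) ^ 2 := by
    rw [← Finset.mul_sum, Fintype.sum_prod_type, sq, Finset.sum_mul_sum]
    simp
  rw [Finset.sum_add_distrib, hdiag, hprod, sum_card_squareFiber_pow h2,
    sum_card_squareFiber_pow h2] at key
  linarith

/-- In characteristic three, with `a = x + y` and `b = x - y`, the three equations say exactly
that the squares of `z` and `w` are those of `a` and `b` in some order. -/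
lemma power_sums_eq_zero_iff (h3 : (3 : F) = 0) (a b z w : F) :
    ((-(a + b)) ^ 2 + (b - a) ^ 2 + z ^ 2 + w ^ 2 = 0 ∧
      (-(a + b)) ^ 4 + (b - a) ^ 4 + z ^ 4 + w ^ 4 = 0 ∧
      (-(a + b)) ^ 10 + (b - a) ^ 10 + z ^ 10 + w ^ 10 = 0) ↔
    (z, w) ∈ squarePairs a b := by
  rw [mem_squarePairs]
  constructor
  · rintro ⟨e2, e4, -⟩
    have hsum : w ^ 2 = a ^ 2 + b ^ 2 - z ^ 2 := by
      linear_combination e2 - (a ^ 2 + b ^ 2) * h3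
    have hw4 : w ^ 4 = (a ^ 2 + b ^ 2 - z ^ 2) ^ 2 := by rw [← hsum]; ring
    have hprod : (z ^ 2 - a ^ 2) * (z ^ 2 - b ^ 2) = 0 := by
      linear_combination -e4 + hw4 + (a ^ 4 + b ^ 4 + z ^ 4 + 5 * a ^ 2 * b ^ 2
        - a ^ 2 * z ^ 2 - b ^ 2 * z ^ 2) * h3
    rcases mul_eq_zero.mp hprod with h | h
    · exact Or.inl ⟨by linear_combination h, by linear_combination hsum - h⟩
    · exact Or.inr ⟨by linear_combination h, by linear_combination hsum - h⟩
  · have hpow (k : ℕ) (h : (z ^ 2 = a ^ 2 ∧ w ^ 2 = b ^ 2) ∨ (z ^ 2 = b ^ 2 ∧ w ^ 2 = a ^ 2)) :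
        z ^ (2 * k) + w ^ (2 * k) = a ^ (2 * k) + b ^ (2 * k) := by
      simp only [pow_mul]
      rcases h with ⟨hz, hw⟩ | ⟨hz, hw⟩ <;> rw [hz, hw]
      ring
    intro h
    refine ⟨?_, ?_, ?_⟩
    · linear_combination hpow 1 h + (a ^ 2 + b ^ 2) * h3
    · linear_combination hpow 2 h + (a ^ 4 + b ^ 4 + 4 * a ^ 2 * b ^ 2) * h3
    · linear_combination hpow 5 h + (a ^ 10 + b ^ 10 + 30 * a ^ 8 * b ^ 2 + 140 * a ^ 6 * b ^ 4
        + 140 * a ^ 4 * b ^ 6 + 30 * a ^ 2 * b ^ 8) * h3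

/-- The number of common zeros of the three power sums over a finite field of
characteristic three. -/
lemma ncard_power_sums_eq_zero (h3 : (3 : F) = 0) :
    {(x, y, z, w) : F × F × F × F |
        x ^ 2 + y ^ 2 + z ^ 2 + w ^ 2 = 0 ∧
        x ^ 4 + y ^ 4 + z ^ 4 + w ^ 4 = 0 ∧
        x ^ 10 + y ^ 10 + z ^ 10 + w ^ 10 = 0}.ncard = 8 * (Fintype.card F - 1) ^ 2 + 1 := by
  have h2 : (2 : F) ≠ 0 := fun h => one_ne_zero (α := F) (by linear_combination h3 - h)
  let f : (Σ _ : F × F, F × F) → F × F × F × F :=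
    fun u => (-(u.1.1 + u.1.2), u.1.2 - u.1.1, u.2.1, u.2.2)
  have hf : Function.Injective f := by
    rintro ⟨⟨a, b⟩, z, w⟩ ⟨⟨a', b'⟩, z', w'⟩ h
    simp only [f, Prod.mk.injEq] at h
    obtain ⟨h₁, h₂, rfl, rfl⟩ := h
    obtain rfl : a = a' := by linear_combination h₁ + h₂ + (a - a') * h3
    obtain rfl : b = b' := by linear_combination h₂
    rfl
  rw [← sum_card_squarePairs h2, ← Finset.card_sigma, ← Set.ncard_coe_finset,
    ← Set.ncard_image_of_injective _ hf]
  congr 1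
  ext ⟨x, y, z, w⟩
  simp only [Set.mem_ofPred_eq, Set.mem_image, Finset.mem_coe, Finset.mem_sigma,
    Finset.mem_univ, true_and]
  constructor
  · intro h
    refine ⟨⟨(x + y, x - y), z, w⟩, ?_, ?_⟩
    · rw [← power_sums_eq_zero_iff h3]
      have hx : -(x + y + (x - y)) = x := by linear_combination -x * h3
      have hy : x - y - (x + y) = y := by linear_combination -y * h3
      rwa [hx, hy]
    · simp only [f, Prod.mk.injEq, and_true]
      exact ⟨by linear_combination -x * h3, by linear_combination -y * h3⟩
  · rintro ⟨⟨⟨a, b⟩, z', w'⟩, h, e⟩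
    simp only [f, Prod.mk.injEq] at e
    obtain ⟨rfl, rfl, rfl, rfl⟩ := e
    exact (power_sums_eq_zero_iff h3 a b _ _).2 h

end

theorem count_four_tuples (m : ℕ) (hm : 0 < m) :
    letI : Fact (Nat.Prime 3) := ⟨by norm_num⟩
    {(x, y, z, w) : GaloisField 3 m × GaloisField 3 m × GaloisField 3 m × GaloisField 3 m |
        x ^ 2 + y ^ 2 + z ^ 2 + w ^ 2 = 0 ∧
        x ^ 4 + y ^ 4 + z ^ 4 + w ^ 4 = 0 ∧
        x ^ 10 + y ^ 10 + z ^ 10 + w ^ 10 = 0}.ncard = 8 * (3 ^ m - 1) ^ 2 + 1 := by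
  classical
  have : Fintype (GaloisField 3 m) := Fintype.ofFinite _
  have h3 : (3 : GaloisField 3 m) = 0 := by exact_mod_cast CharP.cast_eq_zero (GaloisField 3 m) 3
  have hcard : Fintype.card (GaloisField 3 m) = 3 ^ m := by
    rw [← Nat.card_eq_fintype_card, GaloisField.card 3 m hm.ne']
  rw [← hcard]
  exact ncard_power_sums_eq_zero h3
end

section
/- Let p = 3, m a positive integer, and q = 3^m. Then the number of 5-tuples (x,y,z,w,u) ∈ F_q⁵ satisfying x²+y²+z²+w²+u² = 0, x⁴+y⁴+z⁴+w⁴+u⁴ = 0, and x^{10}+y^{10}+z^{10}+w^{10}+u^{10} = 0 equals 5(3^m − 1)(8·3^m − 16) + 1. -/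
open Finset

/-- `v` has its first nonzero entry at `i`, and that entry is `1`. -/
def IsLead (v : Fin 5 → ZMod 3) (i : Fin 5) : Prop := v i = 1 ∧ ∀ k < i, v k = 0

instance (v : Fin 5 → ZMod 3) (i : Fin 5) : Decidable (IsLead v i) := by
  unfold IsLead; infer_instance

/-- Normalized generators of the isotropic lines of `(ZMod 3)⁵` for the standard dot product. -/
def isoPoints : Finset (Fin 5 → ZMod 3) :=
  univ.filter fun v => v ⬝ᵥ v = 0 ∧ ∃ i, IsLead v i

/-- Reduced row echelon bases of the totally isotropic planes of `(ZMod 3)⁵`. -/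
def isoPlanes : Finset ((Fin 5 → ZMod 3) × (Fin 5 → ZMod 3)) :=
  (isoPoints ×ˢ isoPoints).filter fun p =>
    p.1 ⬝ᵥ p.2 = 0 ∧ ∃ j, IsLead p.2 j ∧ p.1 j = 0 ∧ ∃ i < j, IsLead p.1 i

set_option maxRecDepth 100000 in
theorem card_isoPoints : isoPoints.card = 40 := by decide +kernel

set_option maxRecDepth 100000 in
theorem card_isoPlanes : isoPlanes.card = 40 := by decide +kernel

theorem mem_isoPoints {v : Fin 5 → ZMod 3} :
    v ∈ isoPoints ↔ v ⬝ᵥ v = 0 ∧ ∃ i, IsLead v i := by simp [isoPoints]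

theorem mem_isoPlanes {p : (Fin 5 → ZMod 3) × (Fin 5 → ZMod 3)} :
    p ∈ isoPlanes ↔ (p.1 ∈ isoPoints ∧ p.2 ∈ isoPoints) ∧
      p.1 ⬝ᵥ p.2 = 0 ∧ ∃ j, IsLead p.2 j ∧ p.1 j = 0 ∧ ∃ i < j, IsLead p.1 i := by
  simp [isoPlanes]

attribute [irreducible] isoPoints isoPlanes

section

variable {K : Type*} [Field K]

/-- The vector `x` is orthogonal to itself and to its first two Frobenius conjugates. -/
def IsFrobIsotropic (x : Fin 5 → K) : Prop :=
  ∑ k, x k * x k = 0 ∧ ∑ k, x k * x k ^ 3 = 0 ∧ ∑ k, x k * x k ^ 9 = 0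

theorem add_cube [CharP K 3] (a b : K) : (a + b) ^ 3 = a ^ 3 + b ^ 3 := by
  have : Fact (Nat.Prime 3) := ⟨by norm_num⟩
  exact add_pow_char a b 3

/-- A nonzero additive polynomial of degree at most `9` kills every entry of `x`, since a totally
isotropic subspace of a five-dimensional space has dimension at most two. -/
theorem IsFrobIsotropic.exists_additive_relation [CharP K 3] {x : Fin 5 → K}
    (hx : IsFrobIsotropic x) :
    ∃ c : Fin 3 → K, (∃ i, c i ≠ 0) ∧ ∀ k, c 0 * x k + c 1 * x k ^ 3 + c 2 * x k ^ 9 = 0 := by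
  obtain ⟨h1, h2, h3⟩ := hx
  let A : Matrix (Fin 3) (Fin 5) K := Matrix.of ![x, fun k => x k ^ 3, fun k => x k ^ 9]
  have h11 := congrArg (· ^ 3) h1
  have h22 := congrArg (· ^ 9) h1
  have h12 := congrArg (· ^ 3) h2
  have h9 (c : K) : c ^ 9 = (c ^ 3) ^ 3 := by ring
  have hA : A * A.transpose = 0 := by
    simp only [Fin.sum_univ_five] at h1 h2 h3
    simp only [Fin.sum_univ_five, h9 (_ + _), add_cube] at h11 h22 h12
    ext i j
    fin_cases i <;> fin_cases j <;>
      simp [A, Matrix.mul_apply, Fin.sum_univ_five]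
    · linear_combination h1
    · linear_combination h2
    · linear_combination h3
    · linear_combination h2
    · linear_combination h11
    · linear_combination h12
    · linear_combination h3
    · linear_combination h12
    · linear_combination h22
  have hr := Matrix.rank_add_rank_le_card_of_mul_eq_zero hA
  rw [Matrix.rank_transpose] at hr
  have hdep : ¬ LinearIndependent K A.row := fun hli => by
    rw [hli.rank_matrix] at hr
    simp at hr
  obtain ⟨c, hc, hne⟩ := Fintype.not_linearIndependent_iff.1 hdep
  refine ⟨c, hne, fun k => ?_⟩
  have := congrFun hc k
  simpa [Fin.sum_univ_three, A, Matrix.row] using this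

variable [Algebra (ZMod 3) K]

/-- `a` and `b` are linearly independent over `ZMod 3`. -/
def Indep (a b : K) : Prop := a ≠ 0 ∧ ∀ s : ZMod 3, b ≠ s • a

theorem smul_cube (s : ZMod 3) (a : K) : (s • a) ^ 3 = s • a ^ 3 := by
  have : Fact (Nat.Prime 3) := ⟨by norm_num⟩
  rw [smul_pow, ZMod.pow_card]

theorem comb_cube [CharP K 3] (s t : ZMod 3) (a b : K) :
    (s • a + t • b) ^ 3 = s • a ^ 3 + t • b ^ 3 := by
  rw [add_cube, smul_cube, smul_cube]

theorem comb_pow_nine [CharP K 3] (s t : ZMod 3) (a b : K) :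
    (s • a + t • b) ^ 9 = s • a ^ 9 + t • b ^ 9 := by
  have h (c : K) : c ^ 9 = (c ^ 3) ^ 3 := by ring
  rw [h, comb_cube, comb_cube, ← h, ← h]

theorem sum_comb_mul_comb (v w : Fin 5 → ZMod 3) (a b c d : K) :
    ∑ k, (v k • a + w k • b) * (v k • c + w k • d) =
      (v ⬝ᵥ v) • (a * c) + (v ⬝ᵥ w) • (a * d + b * c) + (w ⬝ᵥ w) • (b * d) := by
  simp only [dotProduct, Fin.sum_univ_five, Algebra.smul_def, map_add, map_mul]
  ring

theorem isFrobIsotropic_comb [CharP K 3] {v w : Fin 5 → ZMod 3} (hv : v ⬝ᵥ v = 0)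
    (hvw : v ⬝ᵥ w = 0) (hw : w ⬝ᵥ w = 0) (a b : K) :
    IsFrobIsotropic fun k => v k • a + w k • b := by
  simp only [IsFrobIsotropic, comb_cube, comb_pow_nine, sum_comb_mul_comb, hv, hvw, hw]
  simp

theorem Indep.comb_inj {a b : K} (h : Indep a b) {s t s' t' : ZMod 3}
    (e : s • a + t • b = s' • a + t' • b) : s = s' ∧ t = t' := by
  have : Fact (Nat.Prime 3) := ⟨by norm_num⟩
  have ht : t = t' := by
    by_contra ht
    have h0 : t - t' ≠ 0 := sub_ne_zero.2 ht
    refine h.2 ((t - t')⁻¹ * (s' - s)) ?_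
    have : (t - t') • b = (s' - s) • a := by
      rw [sub_smul, sub_smul]; linear_combination e
    rw [mul_smul, ← this, smul_smul, inv_mul_cancel₀ h0, one_smul]
  subst ht
  exact ⟨smul_left_injective _ h.1 (add_right_cancel e), rfl⟩

theorem Indep.det_ne_zero {a b : K} (h : Indep a b) : a * b ^ 3 - a ^ 3 * b ≠ 0 := by
  have h0 : b ≠ 0 := by simpa using h.2 0
  have h1 : b - a ≠ 0 := sub_ne_zero.2 (by simpa using h.2 1)
  have h2 : b + a ≠ 0 := fun e => h.2 (-1) (by rw [neg_smul, one_smul]; linear_combination e)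
  have : a * b ^ 3 - a ^ 3 * b = a * b * (b - a) * (b + a) := by ring
  rw [this]
  exact mul_ne_zero (mul_ne_zero (mul_ne_zero h.1 h0) h1) h2

theorem dot_eq_zero_of_isFrobIsotropic [CharP K 3] {v w : Fin 5 → ZMod 3} {a b : K}
    (h : Indep a b) (hx : IsFrobIsotropic fun k => v k • a + w k • b) :
    v ⬝ᵥ v = 0 ∧ v ⬝ᵥ w = 0 ∧ w ⬝ᵥ w = 0 := by
  obtain ⟨h1, h2, -⟩ := hx
  simp only [comb_cube, sum_comb_mul_comb] at h1 h2
  have h3 := congrArg (· ^ 3) h1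
  simp only [Algebra.smul_def] at h1 h2 h3
  have hcube (s : ZMod 3) : algebraMap (ZMod 3) K s ^ 3 = algebraMap (ZMod 3) K s := by
    have := smul_cube s (1 : K)
    simpa [Algebra.smul_def] using this
  simp only [add_cube, mul_pow, hcube] at h3
  have hd := h.det_ne_zero
  have hinj : Function.Injective (algebraMap (ZMod 3) K) := by
    have : Fact (Nat.Prime 3) := ⟨by norm_num⟩
    exact (algebraMap (ZMod 3) K).injective
  have key (s : ZMod 3)
      (e : (a * b ^ 3 - a ^ 3 * b) ^ 2 * algebraMap (ZMod 3) K s = 0) : s = 0 :=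
    hinj (by rw [map_zero]; exact (mul_eq_zero.1 e).resolve_left (pow_ne_zero 2 hd))
  refine ⟨key _ ?_, key _ ?_, key _ ?_⟩
  · linear_combination (b ^ 3) ^ 2 * h1 - 2 * b * b ^ 3 * h2 + b ^ 2 * h3
  · linear_combination -(a ^ 3 * b ^ 3) * h1 + (a * b ^ 3 + a ^ 3 * b) * h2 - a * b * h3
  · linear_combination (a ^ 3) ^ 2 * h1 - 2 * a * a ^ 3 * h2 + a ^ 2 * h3

theorem IsFrobIsotropic.mem_span [CharP K 3] {x : Fin 5 → K} (hx : IsFrobIsotropic x)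
    {i j : Fin 5} (h : Indep (x i) (x j)) (k : Fin 5) :
    ∃ s t : ZMod 3, x k = s • x i + t • x j := by
  classical
  obtain ⟨c, ⟨l, hl⟩, hc⟩ := hx.exists_additive_relation
  let p : Polynomial K := .C (c 0) * .X + .C (c 1) * .X ^ 3 + .C (c 2) * .X ^ 9
  have hp : p ≠ 0 := fun hp => hl <| by
    have e1 := congrArg (Polynomial.coeff · 1) hp
    have e3 := congrArg (Polynomial.coeff · 3) hp
    have e9 := congrArg (Polynomial.coeff · 9) hp
    simp [p, Polynomial.coeff_X_pow] at e1 e3 e9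
    fin_cases l <;> assumption
  have hdeg : p.natDegree ≤ 9 := by
    simp only [p]; compute_degree
  have hroot (y : K) : y ∈ p.roots ↔ c 0 * y + c 1 * y ^ 3 + c 2 * y ^ 9 = 0 := by
    rw [Polynomial.mem_roots hp]; simp [p]
  by_contra! hk
  let f : ZMod 3 × ZMod 3 → K := fun st => st.1 • x i + st.2 • x j
  have hf : Function.Injective f := fun st st' e => Prod.ext_iff.2 (h.comb_inj e)
  have hnot : x k ∉ univ.image f := by
    simp only [mem_image, mem_univ, true_and, not_exists]
    exact fun st e => hk st.1 st.2 e.symm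
  have hsub : (insert (x k) (univ.image f)).val ⊆ p.roots := by
    intro y hy
    rw [hroot]
    rcases mem_insert.1 (mem_def.2 hy) with rfl | hy
    · exact hc k
    · obtain ⟨st, -, rfl⟩ := mem_image.1 hy
      simp only [f, comb_cube, comb_pow_nine]
      have hi := hc i
      have hj := hc j
      simp only [Algebra.smul_def]
      linear_combination algebraMap (ZMod 3) K st.1 * hi + algebraMap (ZMod 3) K st.2 * hj
  have hcard := Polynomial.card_le_degree_of_subset_roots hsub
  rw [card_insert_of_notMem hnot, card_image_of_injective _ hf, card_univ, Fintype.card_prod,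
    ZMod.card] at hcard
  omega

/-- The vector `a v`. -/
def pointVec (q : K × (Fin 5 → ZMod 3)) : Fin 5 → K := fun k => q.2 k • q.1

/-- The vector `a v + b w`. -/
def planeVec (q : (K × K) × ((Fin 5 → ZMod 3) × (Fin 5 → ZMod 3))) : Fin 5 → K :=
  fun k => q.2.1 k • q.1.1 + q.2.2 k • q.1.2

theorem exists_first {P : Fin 5 → Prop} (h : ∃ i, P i) : ∃ i, P i ∧ ∀ k < i, ¬ P k := by
  obtain ⟨i, hi, hmin⟩ := wellFounded_lt.has_min {i | P i} h
  exact ⟨i, hi, fun k hk hP => hmin k hP hk⟩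

theorem IsFrobIsotropic.cases [CharP K 3] {x : Fin 5 → K} (hx : IsFrobIsotropic x) :
    x = 0 ∨ (∃ q, (q.1 ≠ 0 ∧ q.2 ∈ isoPoints) ∧ pointVec q = x) ∨
      ∃ q, (Indep q.1.1 q.1.2 ∧ q.2 ∈ isoPlanes) ∧ planeVec q = x := by
  by_cases h0 : x = 0
  · exact .inl h0
  right
  obtain ⟨i, hi, hi'⟩ := exists_first (Function.ne_iff.1 h0)
  simp only [Pi.zero_apply, not_not] at hi hi'
  have hinj := smul_left_injective (ZMod 3) hi
  by_cases h1 : ∀ k, ∃ s : ZMod 3, x k = s • x i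
  · left
    choose v hv using h1
    refine ⟨(x i, v), ⟨hi, mem_isoPoints.2 ⟨?_, i, ?_, fun k hk => ?_⟩⟩,
      funext fun k => (hv k).symm⟩
    · have e : ∑ k, (v k • x i) * (v k • x i) = 0 := by simpa only [← hv] using hx.1
      have e' := sum_comb_mul_comb v 0 (x i) 0 (x i) 0
      simp only [smul_zero, mul_zero, zero_mul, add_zero, e] at e'
      have : Fact (Nat.Prime 3) := ⟨by norm_num⟩
      exact (smul_eq_zero.1 e'.symm).resolve_right (mul_self_ne_zero.2 hi)
    · exact hinj (by simpa using (hv i).symm)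
    · exact hinj (by simp only [← hv k, hi' k hk, zero_smul])
  · right
    obtain ⟨j, hj, hj'⟩ := exists_first (not_forall.1 h1)
    have hind : Indep (x i) (x j) := ⟨hi, not_exists.1 hj⟩
    simp only [not_not] at hj'
    choose v w hvw using hx.mem_span hind
    have hij : i < j := by
      by_contra hle
      rcases (not_lt.1 hle).eq_or_lt with e | e
      · exact hind.2 1 (by rw [e, one_smul])
      · exact hind.2 0 (by rw [hi' j e, zero_smul])
    have huniq {k : Fin 5} {s t : ZMod 3} (e : x k = s • x i + t • x j) : v k = s ∧ w k = t :=
      hind.comb_inj ((hvw k).symm.trans e)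
    have hvi : IsLead v i := ⟨(huniq (s := 1) (t := 0) (by simp)).1,
      fun k hk => (huniq (s := 0) (t := 0) (by simp [hi' k hk])).1⟩
    have hwj : IsLead w j := by
      refine ⟨(huniq (s := 0) (t := 1) (by simp)).2, fun k hk => ?_⟩
      obtain ⟨s, hs⟩ := hj' k hk
      exact (huniq (s := s) (t := 0) (by simp [hs])).2
    have hvj : v j = 0 := (huniq (s := 0) (t := 1) (by simp)).1
    have hxe : x = fun k => v k • x i + w k • x j := funext hvw
    have hx' := hx
    rw [hxe] at hx'
    obtain ⟨d1, d2, d3⟩ := dot_eq_zero_of_isFrobIsotropic hind hx'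
    exact ⟨((x i, x j), (v, w)), ⟨hind, mem_isoPlanes.2 ⟨⟨mem_isoPoints.2 ⟨d1, i, hvi⟩,
      mem_isoPoints.2 ⟨d3, j, hwj⟩⟩, d2, j, hwj, hvj, i, hij, hvi⟩⟩, hxe.symm⟩

theorem pointVec_injOn :
    Set.InjOn (pointVec (K := K)) {q | q.1 ≠ 0 ∧ q.2 ∈ isoPoints} := by
  rintro ⟨a, v⟩ ⟨ha, hv⟩ ⟨a', v'⟩ ⟨ha', hv'⟩ e
  obtain ⟨-, i, hi⟩ := mem_isoPoints.1 hv
  obtain ⟨-, i', hi'⟩ := mem_isoPoints.1 hv'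
  dsimp only at ha ha' hi hi'
  have e (k) : v k • a = v' k • a' := congrFun e k
  have hii : i = i' := by
    rcases lt_trichotomy i i' with h | h | h
    · exact absurd (e i) (by simp [hi.1, hi'.2 i h, ha])
    · exact h
    · exact absurd (e i') (by simp [hi'.1, hi.2 i' h, ha'.symm])
  subst hii
  have haa : a = a' := by simpa [hi.1, hi'.1] using e i
  subst haa
  exact Prod.ext rfl (funext fun k => smul_left_injective _ ha (e k))

theorem planeVec_injOn :
    Set.InjOn (planeVec (K := K)) {q | Indep q.1.1 q.1.2 ∧ q.2 ∈ isoPlanes} := by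
  rintro ⟨⟨a, b⟩, v, w⟩ ⟨ha, hv⟩ ⟨⟨a', b'⟩, v', w'⟩ ⟨ha', hv'⟩ e
  obtain ⟨-, -, j, hj, hvj, i, hij, hi⟩ := mem_isoPlanes.1 hv
  obtain ⟨-, -, j', hj', hvj', i', hij', hi'⟩ := mem_isoPlanes.1 hv'
  dsimp only at ha ha' hi hi' hj hj' hvj hvj'
  have e (k) : v k • a + w k • b = v' k • a' + w' k • b' := congrFun e k
  have hii : i = i' := by
    rcases lt_trichotomy i i' with h | h | h
    · exact absurd (e i) (by simp [hi.1, hj.2 i hij, hi'.2 i h, hj'.2 i (h.trans hij'), ha.1])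
    · exact h
    · exact absurd (e i')
        (by simp [hi'.1, hj'.2 i' hij', hi.2 i' h, hj.2 i' (h.trans hij), ha'.1.symm])
  subst hii
  have haa : a = a' := by simpa [hi.1, hi'.1, hj.2 i hij, hj'.2 i hij'] using e i
  subst haa
  have hjj : j = j' := by
    rcases lt_trichotomy j j' with h | h | h
    · exact absurd (by simpa [hj.1, hvj, hj'.2 j h] using e j) (ha.2 (v' j))
    · exact h
    · exact absurd (by simpa [hj'.1, hvj', hj.2 j' h] using (e j').symm) (ha'.2 (v j'))
  subst hjj
  have hbb : b = b' := by simpa [hj.1, hj'.1, hvj, hvj'] using e j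
  subst hbb
  exact Prod.ext rfl (Prod.ext (funext fun k => (ha.comb_inj (e k)).1)
    (funext fun k => (ha.comb_inj (e k)).2))

theorem pointVec_ne_planeVec {q : K × (Fin 5 → ZMod 3)}
    {r : (K × K) × ((Fin 5 → ZMod 3) × (Fin 5 → ZMod 3))}
    (hr : Indep r.1.1 r.1.2) (hr' : r.2 ∈ isoPlanes) : pointVec q ≠ planeVec r := by
  obtain ⟨⟨a, b⟩, v, w⟩ := r
  obtain ⟨c, u⟩ := q
  intro e
  obtain ⟨-, -, j, hj, hvj, i, hij, hi⟩ := mem_isoPlanes.1 hr'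
  dsimp only at hr hi hj hvj
  have e (k) : u k • c = v k • a + w k • b := congrFun e k
  have : Fact (Nat.Prime 3) := ⟨by norm_num⟩
  have hi' : u i • c = a := by simpa [hi.1, hj.2 i hij] using e i
  have hj' : u j • c = b := by simpa [hj.1, hvj] using e j
  have hui : u i ≠ 0 := fun h => hr.1 (by rw [← hi', h, zero_smul])
  refine hr.2 (u j * (u i)⁻¹) ?_
  rw [← hi', ← hj', smul_smul, inv_mul_cancel_right₀ hui]

theorem card_indep [Fintype K] [DecidableEq K] [DecidablePred fun p : K × K => Indep p.1 p.2] :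
    (univ.filter fun p : K × K => Indep p.1 p.2).card =
      (Fintype.card K - 1) * (Fintype.card K - 3) := by
  have : (univ.filter fun p : K × K => Indep p.1 p.2).card =
      ((univ.erase (0 : K)).sigma fun a => univ \ univ.image fun s : ZMod 3 => s • a).card := by
    refine card_bij' (fun p _ => ⟨p.1, p.2⟩) (fun p _ => (p.1, p.2)) ?_ ?_ ?_ ?_ <;>
      simp only [mem_filter] <;> simp [Indep, eq_comm]
  rw [this, card_sigma]
  have h (a : K) (ha : a ∈ univ.erase (0 : K)) :
      (univ \ univ.image fun s : ZMod 3 => s • a).card = Fintype.card K - 3 := by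
    have : Fact (Nat.Prime 3) := ⟨by norm_num⟩
    rw [card_sdiff_of_subset (subset_univ _),
      card_image_of_injective _ (smul_left_injective _ (ne_of_mem_erase ha)),
      card_univ, card_univ, ZMod.card]
  rw [sum_congr rfl h, sum_const, card_erase_of_mem (mem_univ _), card_univ, smul_eq_mul]

theorem ncard_isFrobIsotropic [Fintype K] [CharP K 3] :
    {x : Fin 5 → K | IsFrobIsotropic x}.ncard =
      1 + (Fintype.card K - 1) * 40 + (Fintype.card K - 1) * (Fintype.card K - 3) * 40 := by
  classical
  let A : Finset (Fin 5 → K) := (univ.erase (0 : K) ×ˢ isoPoints).image pointVec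
  let B : Finset (Fin 5 → K) :=
    ((univ.filter fun p : K × K => Indep p.1 p.2) ×ˢ isoPlanes).image planeVec
  have hA : A.card = (Fintype.card K - 1) * 40 := by
    rw [card_image_of_injOn (pointVec_injOn.mono fun q hq => by simpa using hq), card_product,
      card_isoPoints, card_erase_of_mem (mem_univ _), card_univ]
  have hB : B.card = (Fintype.card K - 1) * (Fintype.card K - 3) * 40 := by
    rw [card_image_of_injOn (planeVec_injOn.mono fun q hq => by simpa using hq), card_product,
      card_isoPlanes, card_indep]
  have hAB : Disjoint A B := by
    rw [disjoint_left]
    rintro x hxA hxB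
    obtain ⟨q, -, rfl⟩ := mem_image.1 hxA
    obtain ⟨r, hr, e⟩ := mem_image.1 hxB
    simp only [mem_product, mem_filter, mem_univ, true_and] at hr
    exact pointVec_ne_planeVec hr.1 hr.2 e.symm
  have h0 : (0 : Fin 5 → K) ∉ A ∪ B := by
    rw [mem_union]
    rintro (h | h)
    · obtain ⟨q, hq, e⟩ := mem_image.1 h
      simp only [mem_product, mem_erase, mem_univ, and_true] at hq
      obtain ⟨-, i, hi⟩ := mem_isoPoints.1 hq.2
      exact hq.1 (by simpa [pointVec, hi.1] using congrFun e i)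
    · obtain ⟨r, hr, e⟩ := mem_image.1 h
      simp only [mem_product, mem_filter, mem_univ, true_and] at hr
      exact pointVec_ne_planeVec (q := (0, 0)) hr.1 hr.2
        (by rw [e]; funext k; simp [pointVec])
  have hS : {x : Fin 5 → K | IsFrobIsotropic x} = ↑(insert 0 (A ∪ B)) := by
    ext x
    simp only [Set.mem_ofPred_eq, mem_coe, mem_insert, mem_union]
    constructor
    · intro hx
      rcases hx.cases with h | ⟨q, hq, rfl⟩ | ⟨q, hq, rfl⟩
      · exact .inl h
      · exact .inr (.inl (mem_image_of_mem _ (by simpa using hq)))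
      · exact .inr (.inr (mem_image_of_mem _ (by simpa using hq)))
    · rintro (rfl | h | h)
      · simp [IsFrobIsotropic]
      · obtain ⟨q, hq, rfl⟩ := mem_image.1 h
        simp only [mem_product, mem_erase, mem_univ, and_true] at hq
        have := isFrobIsotropic_comb (mem_isoPoints.1 hq.2).1 (dotProduct_zero _)
          (dotProduct_zero _) q.1 0
        simp only [smul_zero, add_zero] at this
        exact this
      · obtain ⟨q, hq, rfl⟩ := mem_image.1 h
        simp only [mem_product, mem_filter, mem_univ, true_and] at hq
        obtain ⟨⟨h1, h2⟩, h3, -⟩ := mem_isoPlanes.1 hq.2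
        exact isFrobIsotropic_comb (mem_isoPoints.1 h1).1 h3 (mem_isoPoints.1 h2).1 _ _
  rw [hS, Set.ncard_coe_finset, card_insert_of_notMem h0, card_union_of_disjoint hAB, hA, hB]
  ring

end

theorem count_five_tuples (m : ℕ) (hm : 0 < m) :
    letI : Fact (Nat.Prime 3) := ⟨by norm_num⟩
    {(x, y, z, w, u) : GaloisField 3 m × GaloisField 3 m × GaloisField 3 m ×
        GaloisField 3 m × GaloisField 3 m |
        x ^ 2 + y ^ 2 + z ^ 2 + w ^ 2 + u ^ 2 = 0 ∧
        x ^ 4 + y ^ 4 + z ^ 4 + w ^ 4 + u ^ 4 = 0 ∧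
        x ^ 10 + y ^ 10 + z ^ 10 + w ^ 10 + u ^ 10 = 0}.ncard =
      5 * (3 ^ m - 1) * (8 * 3 ^ m - 16) + 1 := by
  have : Fact (Nat.Prime 3) := ⟨by norm_num⟩
  have : Fintype (GaloisField 3 m) := Fintype.ofFinite _
  have hcard : Fintype.card (GaloisField 3 m) = 3 ^ m := by
    rw [← Nat.card_eq_fintype_card, GaloisField.card 3 m hm.ne']
  have hS := ncard_isFrobIsotropic (K := GaloisField 3 m)
  rw [hcard] at hS
  have hq : 3 ≤ 3 ^ m := Nat.le_self_pow hm.ne' 3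
  have hN : 5 * (3 ^ m - 1) * (8 * 3 ^ m - 16) + 1 =
      1 + (3 ^ m - 1) * 40 + (3 ^ m - 1) * (3 ^ m - 3) * 40 := by
    obtain ⟨n, hn⟩ := Nat.exists_eq_add_of_le hq
    rw [hn, show 3 + n - 1 = n + 2 by omega, show 8 * (3 + n) - 16 = 8 * n + 8 by omega,
      show 3 + n - 3 = n by omega]
    ring
  rw [hN, ← hS]
  refine Set.ncard_congr (fun p _ => ![p.1, p.2.1, p.2.2.1, p.2.2.2.1, p.2.2.2.2]) ?_ ?_ ?_
  · rintro ⟨x, y, z, w, u⟩ ⟨h1, h2, h3⟩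
    simp only [Set.mem_ofPred_eq, IsFrobIsotropic, Fin.sum_univ_five]
    exact ⟨by linear_combination (norm := (simp; ring)) h1,
      by linear_combination (norm := (simp; ring)) h2,
      by linear_combination (norm := (simp; ring)) h3⟩
  · rintro ⟨x, y, z, w, u⟩ ⟨x', y', z', w', u'⟩ - - e
    simpa using e
  · rintro x ⟨h1, h2, h3⟩
    simp only [Fin.sum_univ_five] at h1 h2 h3
    refine ⟨(x 0, x 1, x 2, x 3, x 4), ⟨by linear_combination h1, by linear_combination h2,
      by linear_combination h3⟩, ?_⟩
    ext k
    fin_cases k <;> rfl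
end

section
/- Let p be a prime with p ≡ 3 (mod 4), m a positive integer, and q = p^m. If x, y ∈ F_q satisfy x² + y² = 0, x^{p+1} + y^{p+1} = 0, and x^{p²+1} + y^{p²+1} = 0, then x = 0 and y = 0. -/
theorem only_zero_solution (p : ℕ) [Fact p.Prime] (hp4 : p % 4 = 3)
    (m : ℕ) (hm : 0 < m) (x y : GaloisField p m)
    (h1 : x ^ 2 + y ^ 2 = 0)
    (h2 : x ^ (p + 1) + y ^ (p + 1) = 0)
    (h3 : x ^ (p ^ 2 + 1) + y ^ (p ^ 2 + 1) = 0) :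
    x = 0 ∧ y = 0 := by
  have two_ne : (2 : GaloisField p m) ≠ 0 := by
    apply Ring.two_ne_zero
    rw [ringChar.eq (GaloisField p m) p]
    omega
  obtain ⟨k, hk⟩ : ∃ k, p + 1 = 4 * k := ⟨(p + 1) / 4, by omega⟩
  have hx2 : x ^ 2 = -y ^ 2 := eq_neg_of_add_eq_zero_left h1
  have hx4 : x ^ 4 = y ^ 4 := by linear_combination (x ^ 2 - y ^ 2) * hx2
  have hy : y = 0 := by
    rw [hk, pow_mul, hx4, ← pow_mul, ← two_mul] at h2
    exact eq_zero_of_pow_eq_zero ((mul_eq_zero.mp h2).resolve_left two_ne)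
  refine ⟨?_, hy⟩
  simpa [hy] using h1
end

section
/- Let p be a prime with p ≡ 3 (mod 4), m a positive integer, and q = p^m. Then the number of pairs (x,y) ∈ F_q² satisfying x² + y² + 1 = 0, x^{p+1} + y^{p+1} + 1 = 0, and x^{p²+1} + y^{p²+1} + 1 = 0 equals p + 1. -/
/-- Over a finite field of odd characteristic, the conic `x² + y² + 1 = 0` has `q - χ(-1)` affine
points, where `χ` is the quadratic character. -/
theorem card_sq_add_sq_add_one_eq_zero {F : Type*} [Field F] [Fintype F] [DecidableEq F]
    (hF : ringChar F ≠ 2) :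
    ((Finset.univ.filter fun z : F × F => z.1 ^ 2 + z.2 ^ 2 + 1 = 0).card : ℤ) =
      Fintype.card F - quadraticChar F (-1) := by
  have hfib := Finset.card_eq_sum_card_fiberwise (f := fun z : F × F => z.1 ^ 2)
    (s := Finset.univ.filter fun z : F × F => z.1 ^ 2 + z.2 ^ 2 + 1 = 0)
    (t := Finset.univ) (fun _ _ => by simp)
  have hprod (a : F) :
      ((Finset.univ.filter fun z : F × F => z.1 ^ 2 + z.2 ^ 2 + 1 = 0).filter
        fun z => z.1 ^ 2 = a) =
      {x : F | x ^ 2 = a}.toFinset ×ˢ {y : F | y ^ 2 = -1 - a}.toFinset := by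
    ext ⟨x, y⟩
    simp only [Finset.mem_filter, Finset.mem_univ, true_and, Finset.mem_product,
      Set.mem_toFinset, Set.mem_ofPred_eq]
    constructor
    · rintro ⟨h, rfl⟩
      exact ⟨rfl, by linear_combination h⟩
    · rintro ⟨rfl, h⟩
      exact ⟨by linear_combination h, rfl⟩
  rw [hfib]
  push_cast
  simp_rw [hprod, Finset.card_product]
  push_cast
  simp_rw [quadraticChar_card_sqrts hF]
  have hsum : ∑ a : F, quadraticChar F a = 0 := quadraticChar_sum_zero hF
  have hsum' : ∑ a : F, quadraticChar F (-1 - a) = 0 := by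
    rw [← hsum]
    exact Fintype.sum_equiv (Equiv.subLeft (-1)) _ _ fun _ => rfl
  have hjac : ∑ a : F, quadraticChar F a * quadraticChar F (-1 - a) =
      - quadraticChar F (-1) := by
    have hJ := jacobiSum_nontrivial_inv (quadraticChar_ne_one hF)
    rw [(quadraticChar_isQuadratic F).inv, jacobiSum] at hJ
    rw [← hJ]
    refine Fintype.sum_equiv (Equiv.neg F) _ _ fun a => ?_
    rw [Equiv.neg_apply, ← map_mul, ← map_mul]
    congr 1
    ring
  simp only [add_mul, mul_add, mul_one, one_mul, Finset.sum_add_distrib, hsum, hsum', hjac]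
  simp
  ring

/-- Two isotropic vectors `(x, y, 1)`, `(u, v, 1)` which are orthogonal to each other coincide. -/
theorem eq_of_isotropic_of_orthogonal {F : Type*} [Field F] {x y u v : F}
    (h : x ^ 2 + y ^ 2 + 1 = 0) (h' : u ^ 2 + v ^ 2 + 1 = 0) (h'' : x * u + y * v + 1 = 0) :
    u = x ∧ v = y := by
  have hdet : x * v - y * u = 0 := by
    refine pow_eq_zero_iff two_ne_zero |>.1 ?_
    linear_combination (u ^ 2 + v ^ 2) * h - h' - (x * u + y * v - 1) * h''
  constructor
  · linear_combination u * h - x * h'' + y * hdet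
  · linear_combination v * h - y * h'' - x * hdet

theorem count_pairs (p : ℕ) [Fact p.Prime] (hp4 : p % 4 = 3)
    (m : ℕ) (hm : 0 < m) :
    {(x, y) : GaloisField p m × GaloisField p m |
        x ^ 2 + y ^ 2 + 1 = 0 ∧
        x ^ (p + 1) + y ^ (p + 1) + 1 = 0 ∧
        x ^ (p ^ 2 + 1) + y ^ (p ^ 2 + 1) + 1 = 0}.ncard = p + 1 := by
  have hp2 : p ≠ 2 := by rintro rfl; omega
  let f := algebraMap (ZMod p) (GaloisField p m)
  have hf : Function.Injective f := f.injective
  have hset : {(x, y) : GaloisField p m × GaloisField p m |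
        x ^ 2 + y ^ 2 + 1 = 0 ∧
        x ^ (p + 1) + y ^ (p + 1) + 1 = 0 ∧
        x ^ (p ^ 2 + 1) + y ^ (p ^ 2 + 1) + 1 = 0} =
      Prod.map f f ''
        (Finset.univ.filter fun z : ZMod p × ZMod p => z.1 ^ 2 + z.2 ^ 2 + 1 = 0) := by
    ext ⟨x, y⟩
    simp only [Set.mem_ofPred_eq, Set.mem_image, Finset.coe_filter, Finset.mem_univ, true_and,
      Prod.exists, Prod.map_apply, Prod.mk.injEq]
    constructor
    · rintro ⟨h, h', -⟩
      have hfrob : (x ^ p) ^ 2 + (y ^ p) ^ 2 + 1 = 0 := by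
        have := congrArg (frobenius (GaloisField p m) p) h
        simpa only [map_add, map_pow, map_one, map_zero, frobenius_def] using this
      obtain ⟨hx, hy⟩ := eq_of_isotropic_of_orthogonal h hfrob
        (by linear_combination h')
      have hmem (z : GaloisField p m) (hz : z ^ p = z) : ∃ a, f a = z :=
        (bot_le : ⊥ ≤ f.fieldRange) ((Subfield.mem_bot_iff_pow_eq_self _ p).2 hz)
      obtain ⟨a, rfl⟩ := hmem x hx
      obtain ⟨b, rfl⟩ := hmem y hy
      exact ⟨a, b, hf (by simpa using h), rfl, rfl⟩
    · rintro ⟨a, b, h, rfl, rfl⟩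
      have h2 (c : ZMod p) : c ^ (p ^ 2) = c := ZMod.pow_card_pow c
      simp only [← map_pow, ← map_add, ← map_one f, pow_succ _ p, pow_succ _ (p ^ 2),
        ZMod.pow_card, h2, ← pow_two, h, map_zero, and_self]
  have hcard := card_sq_add_sq_add_one_eq_zero (F := ZMod p) (by rwa [ZMod.ringChar_zmod_n])
  have hchar : quadraticChar (ZMod p) (-1) = -1 := by
    rw [quadraticChar_neg_one (by rwa [ZMod.ringChar_zmod_n]), ZMod.card,
      ZMod.χ₄_nat_three_mod_four hp4]
  rw [hchar, ZMod.card] at hcard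
  rw [hset, Set.ncard_image_of_injective _ (hf.prodMap hf), Set.ncard_coe_finset]
  omega
end

section
/- Let p be an odd prime, m a positive integer, and q = p^m. If x, y ∈ F_q satisfy x^{p+1} + y^{p+1} + 1 = 0 and x^{p²+1} + y^{p²+1} + 1 = 0, then x^{p³} = x and y^{p³} = y (that is, x and y lie in the subfield F_{p³} of an algebraic closure). -/
/-- Two vectors `(a, a', 1)` and `(d, d', 1)` orthogonal to both `(b, b', 1)` and `(c, c', 1)`
coincide, unless `(b, b', 1) = (c, c', 1)`. -/
theorem eq_or_eq_of_orthogonal {K : Type*} [Field K] {a a' b b' c c' d d' : K}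
    (hab : a * b + a' * b' + 1 = 0) (hac : a * c + a' * c' + 1 = 0)
    (hdb : d * b + d' * b' + 1 = 0) (hdc : d * c + d' * c' + 1 = 0) :
    (a = d ∧ a' = d') ∨ (b = c ∧ b' = c') := by
  by_cases h : b * c' - b' * c = 0
  · right
    constructor
    · linear_combination b * hac - c * hab - a' * h
    · linear_combination b' * hac - c' * hab + a * h
  · left
    constructor
    · refine sub_eq_zero.mp ((mul_eq_zero.mp ?_).resolve_right h)
      linear_combination c' * (hab - hdb) - b' * (hac - hdc)
    · refine sub_eq_zero.mp ((mul_eq_zero.mp ?_).resolve_right h)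
      linear_combination b * (hac - hdc) - c * (hab - hdb)

theorem mem_subfield_p_cubed (p : ℕ) [Fact p.Prime] (hodd : Odd p)
    (m : ℕ) (hm : 0 < m) (x y : GaloisField p m)
    (h2 : x ^ (p + 1) + y ^ (p + 1) + 1 = 0)
    (h3 : x ^ (p ^ 2 + 1) + y ^ (p ^ 2 + 1) + 1 = 0) :
    x ^ p ^ 3 = x ∧ y ^ p ^ 3 = y := by
  set φ := frobenius (GaloisField p m) p with hφ
  have pow_one (z : GaloisField p m) : z ^ p = φ z := rfl
  have pow_two (z : GaloisField p m) : z ^ p ^ 2 = φ (φ z) := by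
    simp only [hφ, frobenius_def, ← pow_mul]; ring_nf
  have pow_three (z : GaloisField p m) : z ^ p ^ 3 = φ (φ (φ z)) := by
    simp only [hφ, frobenius_def, ← pow_mul]; ring_nf
  rw [pow_succ x, pow_succ y, pow_one, pow_one] at h2
  rw [pow_succ x, pow_succ y, pow_two, pow_two] at h3
  have h2φ := congrArg φ h2
  have h3φ := congrArg φ h3
  have h2φφ := congrArg φ h2φ
  simp only [map_add, map_mul, map_one, map_zero] at h2φ h3φ h2φφ
  rw [pow_three, pow_three]
  have hinj : Function.Injective φ := frobenius_inj _ p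
  rcases eq_or_eq_of_orthogonal (a := x) (a' := y) (b := φ x) (b' := φ y)
      (c := φ (φ x)) (c' := φ (φ y)) (d := φ (φ (φ x))) (d' := φ (φ (φ y)))
      (by linear_combination h2) (by linear_combination h3)
      h3φ h2φφ with ⟨hx, hy⟩ | ⟨hx, hy⟩
  · exact ⟨hx.symm, hy.symm⟩
  · have hx' := (hinj hx).symm
    have hy' := (hinj hy).symm
    simp only [hx', hy', and_self]
end

section
/- Let L be a finite field of odd characteristic in which −1 is a square. Let a, s, t ∈ L with s ≠ 0, s² = a, and t² = −1. Then for every pair (x,y) ∈ L² with x² + y² = a there exists θ ∈ L ∖ {0} such that x = (1/2)·s·(θ + θ^{−1}) and y = (1/2)·s·t·(θ − θ^{−1}). -/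
theorem sum_of_two_squares_param (L : Type*) [Field L] [Finite L]
    (hchar : Odd (ringChar L)) (hsq : IsSquare (-1 : L))
    (a s t : L) (hs : s ≠ 0) (hs2 : s ^ 2 = a) (ht : t ^ 2 = -1)
    (x y : L) (hxy : x ^ 2 + y ^ 2 = a) :
    ∃ θ : L, θ ≠ 0 ∧ x = (1 / 2) * s * (θ + θ⁻¹) ∧ y = (1 / 2) * s * t * (θ - θ⁻¹) := by
  have h2 : (2 : L) ≠ 0 := Ring.two_ne_zero fun h => by
    rw [h] at hchar
    exact absurd hchar (by decide)
  have hmul : (x - t * y) / s * ((x + t * y) / s) = 1 := by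
    field_simp
    linear_combination hxy - hs2 - y ^ 2 * ht
  refine ⟨(x - t * y) / s, left_ne_zero_of_mul_eq_one hmul, ?_, ?_⟩ <;>
    rw [inv_eq_of_mul_eq_one_right hmul] <;> field_simp
  · ring
  · linear_combination 2 * y * ht
end

section
/- Let p = 3, m a positive integer, and q = 3^m. Then every 5-tuple (x,y,z,w,u) ∈ F_q⁵ satisfying x²+y²+z²+w²+u² = 0, x⁴+y⁴+z⁴+w⁴+u⁴ = 0, and x^{10}+y^{10}+z^{10}+w^{10}+u^{10} = 0 has at least one coordinate equal to zero. -/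
/-- If three vectors of length five span a totally isotropic space for the standard bilinear form,
then their leading `3 × 3` minor vanishes. -/
theorem leading_minor_eq_zero_of_isotropic {K : Type*} [Field K]
    {x₀ y₀ z₀ w₀ u₀ x₁ y₁ z₁ w₁ u₁ x₂ y₂ z₂ w₂ u₂ : K}
    (h₀₀ : x₀ * x₀ + y₀ * y₀ + z₀ * z₀ + w₀ * w₀ + u₀ * u₀ = 0)
    (h₀₁ : x₀ * x₁ + y₀ * y₁ + z₀ * z₁ + w₀ * w₁ + u₀ * u₁ = 0)
    (h₀₂ : x₀ * x₂ + y₀ * y₂ + z₀ * z₂ + w₀ * w₂ + u₀ * u₂ = 0)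
    (h₁₁ : x₁ * x₁ + y₁ * y₁ + z₁ * z₁ + w₁ * w₁ + u₁ * u₁ = 0)
    (h₁₂ : x₁ * x₂ + y₁ * y₂ + z₁ * z₂ + w₁ * w₂ + u₁ * u₂ = 0)
    (h₂₂ : x₂ * x₂ + y₂ * y₂ + z₂ * z₂ + w₂ * w₂ + u₂ * u₂ = 0) :
    x₀ * (y₁ * z₂ - y₂ * z₁) - y₀ * (x₁ * z₂ - x₂ * z₁) + z₀ * (x₁ * y₂ - x₂ * y₁) = 0 := by
  have gram : (x₀ * (y₁ * z₂ - y₂ * z₁) - y₀ * (x₁ * z₂ - x₂ * z₁)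
        + z₀ * (x₁ * y₂ - x₂ * y₁)) ^ 2
      = (x₀ * x₀ + y₀ * y₀ + z₀ * z₀) *
          ((x₁ * x₁ + y₁ * y₁ + z₁ * z₁) * (x₂ * x₂ + y₂ * y₂ + z₂ * z₂)
            - (x₁ * x₂ + y₁ * y₂ + z₁ * z₂) ^ 2)
        - (x₀ * x₁ + y₀ * y₁ + z₀ * z₁) *
          ((x₀ * x₁ + y₀ * y₁ + z₀ * z₁) * (x₂ * x₂ + y₂ * y₂ + z₂ * z₂)
            - (x₁ * x₂ + y₁ * y₂ + z₁ * z₂) * (x₀ * x₂ + y₀ * y₂ + z₀ * z₂))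
        + (x₀ * x₂ + y₀ * y₂ + z₀ * z₂) *
          ((x₀ * x₁ + y₀ * y₁ + z₀ * z₁) * (x₁ * x₂ + y₁ * y₂ + z₁ * z₂)
            - (x₁ * x₁ + y₁ * y₁ + z₁ * z₁) * (x₀ * x₂ + y₀ * y₂ + z₀ * z₂)) := by
    ring
  have e₀₀ : x₀ * x₀ + y₀ * y₀ + z₀ * z₀ = -(w₀ * w₀ + u₀ * u₀) := by linear_combination h₀₀
  have e₀₁ : x₀ * x₁ + y₀ * y₁ + z₀ * z₁ = -(w₀ * w₁ + u₀ * u₁) := by linear_combination h₀₁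
  have e₀₂ : x₀ * x₂ + y₀ * y₂ + z₀ * z₂ = -(w₀ * w₂ + u₀ * u₂) := by linear_combination h₀₂
  have e₁₁ : x₁ * x₁ + y₁ * y₁ + z₁ * z₁ = -(w₁ * w₁ + u₁ * u₁) := by linear_combination h₁₁
  have e₁₂ : x₁ * x₂ + y₁ * y₂ + z₁ * z₂ = -(w₁ * w₂ + u₁ * u₂) := by linear_combination h₁₂
  have e₂₂ : x₂ * x₂ + y₂ * y₂ + z₂ * z₂ = -(w₂ * w₂ + u₂ * u₂) := by linear_combination h₂₂
  rw [e₀₀, e₀₁, e₀₂, e₁₁, e₁₂, e₂₂] at gram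
  apply pow_eq_zero_iff (two_ne_zero) |>.mp
  rw [gram]
  ring

/-- In characteristic `3`, if the Moore determinant of `x, y, z` vanishes and `x, y` are linearly
independent over the prime field, then `z` is a combination of `x` and `y` over the prime field. -/
theorem exists_combination_of_moore_det_eq_zero {K : Type*} [Field K] [CharP K 3]
    (φ : ZMod 3 →+* K) {x y z : K} (hx : x ≠ 0) (hy : y ≠ 0) (hyx : y ≠ x) (hyx' : y ≠ -x)
    (h : x * (y ^ 3 * z ^ 9 - y ^ 9 * z ^ 3) - y * (x ^ 3 * z ^ 9 - x ^ 9 * z ^ 3)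
      + z * (x ^ 3 * y ^ 9 - x ^ 9 * y ^ 3) = 0) :
    ∃ c d : ZMod 3, z = φ c * x + φ d * y := by
  have three : (3 : K) = 0 := by exact_mod_cast CharP.cast_eq_zero K 3
  have cube_sub (a b : K) : (a - b) ^ 3 = a ^ 3 - b ^ 3 := by
    linear_combination (a * b ^ 2 - a ^ 2 * b) * three
  have cubes : (z ^ 3 - x ^ 2 * z) ^ 3 = z ^ 9 - x ^ 6 * z ^ 3 := by rw [cube_sub]; ring
  have cubes' : (y ^ 3 - x ^ 2 * y) ^ 3 = y ^ 9 - x ^ 6 * y ^ 3 := by rw [cube_sub]; ring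
  have factored : x * (y * (y - x) * (y + x)) *
      ((z * (z - x) * (z + x)) *
        ((z - y) * (z - y - x) * (z - y + x)) * ((z + y) * (z + y - x) * (z + y + x))) = 0 := by
    have e₁ : (z - y) * (z - y - x) * (z - y + x)
        = (z ^ 3 - x ^ 2 * z) - (y ^ 3 - x ^ 2 * y) := by
      linear_combination (z * y ^ 2 - z ^ 2 * y) * three
    have e₂ : (z + y) * (z + y - x) * (z + y + x)
        = (z ^ 3 - x ^ 2 * z) + (y ^ 3 - x ^ 2 * y) := by
      linear_combination (z * y ^ 2 + z ^ 2 * y) * three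
    rw [e₁, e₂]
    linear_combination h + x * (y ^ 3 - x ^ 2 * y) * cubes - x * (z ^ 3 - x ^ 2 * z) * cubes'
  have hyx₀ : y - x ≠ 0 := sub_ne_zero.mpr hyx
  have hyx₁ : y + x ≠ 0 := fun h => hyx' (eq_neg_of_add_eq_zero_left h)
  simp only [mul_eq_zero, hx, hy, hyx₀, hyx₁, false_or] at factored
  rcases factored with ((((h | h) | h) | ((h | h) | h)) | ((h | h) | h))
  · exact ⟨0, 0, by simp [h]⟩
  · exact ⟨1, 0, by simp; linear_combination h⟩
  · exact ⟨-1, 0, by simp; linear_combination h⟩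
  · exact ⟨0, 1, by simp; linear_combination h⟩
  · exact ⟨1, 1, by simp; linear_combination h⟩
  · exact ⟨-1, 1, by simp; linear_combination h⟩
  · exact ⟨0, -1, by simp; linear_combination h⟩
  · exact ⟨1, -1, by simp; linear_combination h⟩
  · exact ⟨-1, -1, by simp; linear_combination h⟩

/-- A symmetric bilinear form on the plane for which `(x, y)` and `(x ^ 3, y ^ 3)` span a totally
isotropic subspace is zero as soon as these two vectors are linearly independent. -/
theorem form_eq_zero_of_isotropic {K : Type*} [Field K] {x y A B C : K}
    (hx : x ≠ 0) (hy : y ≠ 0) (hyx : y ≠ x) (hyx' : y ≠ -x)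
    (h₂ : A * x ^ 2 + 2 * B * (x * y) + C * y ^ 2 = 0)
    (h₄ : A * x ^ 4 + B * (x * y ^ 3 + x ^ 3 * y) + C * y ^ 4 = 0)
    (h₆ : A * x ^ 6 + 2 * B * (x ^ 3 * y ^ 3) + C * y ^ 6 = 0) :
    A = 0 ∧ B = 0 ∧ C = 0 := by
  have hD : (x * y * (y - x) * (y + x)) ^ 2 ≠ 0 := by
    have hyx₀ : y - x ≠ 0 := sub_ne_zero.mpr hyx
    have hyx₁ : y + x ≠ 0 := fun h => hyx' (eq_neg_of_add_eq_zero_left h)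
    positivity
  refine ⟨?_, ?_, ?_⟩ <;> apply (mul_eq_zero.mp ?_).resolve_right hD
  · linear_combination y ^ 6 * h₂ - 2 * y ^ 4 * h₄ + y ^ 2 * h₆
  · linear_combination
      -(x ^ 3 * y ^ 3) * h₂ + (x * y ^ 3 + x ^ 3 * y) * h₄ - x * y * h₆
  · linear_combination x ^ 6 * h₂ - 2 * x ^ 4 * h₄ + x ^ 2 * h₆

set_option synthInstance.maxHeartbeats 200000 in
set_option synthInstance.maxSize 2000 in
set_option maxRecDepth 100000 in
/-- A two-dimensional self-orthogonal ternary code of length five, in systematic form, has a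
coordinate that vanishes identically. -/
theorem zero_column_of_self_orthogonal_ternary : ∀ c d e f g h : ZMod 3,
    1 + c ^ 2 + e ^ 2 + g ^ 2 = 0 → c * d + e * f + g * h = 0 → 1 + d ^ 2 + f ^ 2 + h ^ 2 = 0 →
    (c = 0 ∧ d = 0) ∨ (e = 0 ∧ f = 0) ∨ (g = 0 ∧ h = 0) := by
  decide

section CharThree

variable {K : Type*} [Field K] [CharP K 3]

theorem sum_five_pow_three_mul {n : ℕ} {x y z w u : K}
    (h : x ^ n + y ^ n + z ^ n + w ^ n + u ^ n = 0) :
    x ^ (n * 3) + y ^ (n * 3) + z ^ (n * 3) + w ^ (n * 3) + u ^ (n * 3) = 0 := by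
  have : Fact (Nat.Prime 3) := ⟨Nat.prime_three⟩
  simp only [pow_mul, ← add_pow_char, h]
  norm_num

/-- The Moore determinant of three of the coordinates of a solution vanishes. -/
theorem moore_det_eq_zero {x y z w u : K}
    (h₂ : x ^ 2 + y ^ 2 + z ^ 2 + w ^ 2 + u ^ 2 = 0)
    (h₄ : x ^ 4 + y ^ 4 + z ^ 4 + w ^ 4 + u ^ 4 = 0)
    (h₁₀ : x ^ 10 + y ^ 10 + z ^ 10 + w ^ 10 + u ^ 10 = 0) :
    x * (y ^ 3 * z ^ 9 - y ^ 9 * z ^ 3) - y * (x ^ 3 * z ^ 9 - x ^ 9 * z ^ 3)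
      + z * (x ^ 3 * y ^ 9 - x ^ 9 * y ^ 3) = 0 := by
  have h₆ := sum_five_pow_three_mul h₂
  have h₁₈ := sum_five_pow_three_mul h₆
  have h₁₂ := sum_five_pow_three_mul h₄
  refine leading_minor_eq_zero_of_isotropic (w₀ := w) (u₀ := u) (w₁ := w ^ 3) (u₁ := u ^ 3)
    (w₂ := w ^ 9) (u₂ := u ^ 9) ?_ ?_ ?_ ?_ ?_ ?_
  · linear_combination h₂
  · linear_combination h₄
  · linear_combination h₁₀
  · linear_combination h₆
  · linear_combination h₁₂
  · linear_combination h₁₈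

theorem zero_coordinate_of_independent_pair {x y z w u : K} (hx : x ≠ 0) (hy : y ≠ 0)
    (hyx : y ≠ x) (hyx' : y ≠ -x)
    (h₂ : x ^ 2 + y ^ 2 + z ^ 2 + w ^ 2 + u ^ 2 = 0)
    (h₄ : x ^ 4 + y ^ 4 + z ^ 4 + w ^ 4 + u ^ 4 = 0)
    (h₁₀ : x ^ 10 + y ^ 10 + z ^ 10 + w ^ 10 + u ^ 10 = 0) :
    z = 0 ∨ w = 0 ∨ u = 0 := by
  let φ : ZMod 3 →+* K := ZMod.castHom dvd_rfl K
  have h₆ := sum_five_pow_three_mul h₂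
  obtain ⟨c, d, hz⟩ := exists_combination_of_moore_det_eq_zero φ hx hy hyx hyx'
    (moore_det_eq_zero h₂ h₄ h₁₀)
  obtain ⟨e, f, hw⟩ := exists_combination_of_moore_det_eq_zero φ (z := w) hx hy hyx hyx'
    (moore_det_eq_zero (w := z) (u := u) (by linear_combination h₂) (by linear_combination h₄)
      (by linear_combination h₁₀))
  obtain ⟨g, h, hu⟩ := exists_combination_of_moore_det_eq_zero φ (z := u) hx hy hyx hyx'
    (moore_det_eq_zero (w := z) (u := w) (by linear_combination h₂) (by linear_combination h₄)
      (by linear_combination h₁₀))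
  have : Fact (Nat.Prime 3) := ⟨Nat.prime_three⟩
  have frob (a b : ZMod 3) : (φ a * x + φ b * y) ^ 3 = φ a * x ^ 3 + φ b * y ^ 3 := by
    rw [add_pow_char, mul_pow, mul_pow, ← map_pow, ← map_pow, ZMod.pow_card, ZMod.pow_card]
  have hz₃ : z ^ 3 = φ c * x ^ 3 + φ d * y ^ 3 := by rw [hz, frob]
  have hw₃ : w ^ 3 = φ e * x ^ 3 + φ f * y ^ 3 := by rw [hw, frob]
  have hu₃ : u ^ 3 = φ g * x ^ 3 + φ h * y ^ 3 := by rw [hu, frob]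
  have h₄' : x * x ^ 3 + y * y ^ 3 + z * z ^ 3 + w * w ^ 3 + u * u ^ 3 = 0 := by
    linear_combination h₄
  have h₆' : (x ^ 3) ^ 2 + (y ^ 3) ^ 2 + (z ^ 3) ^ 2 + (w ^ 3) ^ 2 + (u ^ 3) ^ 2 = 0 := by
    linear_combination h₆
  rw [hz₃, hw₃, hu₃] at h₄' h₆'
  rw [hz, hw, hu] at h₂ h₄'
  obtain ⟨hA, hB, hC⟩ := form_eq_zero_of_isotropic (A := φ (1 + c ^ 2 + e ^ 2 + g ^ 2))
    (B := φ (c * d + e * f + g * h)) (C := φ (1 + d ^ 2 + f ^ 2 + h ^ 2)) hx hy hyx hyx'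
    (by simp only [map_add, map_mul, map_pow, map_one]; linear_combination h₂)
    (by simp only [map_add, map_mul, map_pow, map_one]; linear_combination h₄')
    (by simp only [map_add, map_mul, map_pow, map_one]; linear_combination h₆')
  rw [map_eq_zero] at hA hB hC
  rcases zero_column_of_self_orthogonal_ternary c d e f g h hA hB hC with
    ⟨rfl, rfl⟩ | ⟨rfl, rfl⟩ | ⟨rfl, rfl⟩
  · left; simp [hz]
  · right; left; simp [hw]
  · right; right; simp [hu]

theorem zero_coordinate_of_power_sums {x y z w u : K}
    (h₂ : x ^ 2 + y ^ 2 + z ^ 2 + w ^ 2 + u ^ 2 = 0)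
    (h₄ : x ^ 4 + y ^ 4 + z ^ 4 + w ^ 4 + u ^ 4 = 0)
    (h₁₀ : x ^ 10 + y ^ 10 + z ^ 10 + w ^ 10 + u ^ 10 = 0) :
    x = 0 ∨ y = 0 ∨ z = 0 ∨ w = 0 ∨ u = 0 := by
  by_contra! hne
  obtain ⟨hx, hy, hz, hw, hu⟩ := hne
  have sq_eq {b p q r : K} (hb : b ≠ 0) (hp : p ≠ 0) (hq : q ≠ 0) (hr : r ≠ 0)
      (h₂ : x ^ 2 + b ^ 2 + p ^ 2 + q ^ 2 + r ^ 2 = 0)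
      (h₄ : x ^ 4 + b ^ 4 + p ^ 4 + q ^ 4 + r ^ 4 = 0)
      (h₁₀ : x ^ 10 + b ^ 10 + p ^ 10 + q ^ 10 + r ^ 10 = 0) : b ^ 2 = x ^ 2 := by
    by_contra hbx
    have := zero_coordinate_of_independent_pair hx hb (fun h => hbx (by rw [h]))
      (fun h => hbx (by rw [h, neg_sq])) h₂ h₄ h₁₀
    tauto
  have ey := sq_eq hy hz hw hu h₂ h₄ h₁₀
  have ez := sq_eq hz hy hw hu (by linear_combination h₂) (by linear_combination h₄)
    (by linear_combination h₁₀)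
  have ew := sq_eq hw hy hz hu (by linear_combination h₂) (by linear_combination h₄)
    (by linear_combination h₁₀)
  have eu := sq_eq hu hy hz hw (by linear_combination h₂) (by linear_combination h₄)
    (by linear_combination h₁₀)
  have three : (3 : K) = 0 := by exact_mod_cast CharP.cast_eq_zero K 3
  have : x ^ 2 = 0 := by
    linear_combination 2 * x ^ 2 * three - h₂ + ey + ez + ew + eu
  exact hx (pow_eq_zero_iff two_ne_zero |>.mp this)

end CharThree

theorem five_tuple_has_zero_coordinate (m : ℕ) (hm : 0 < m) :
    letI : Fact (Nat.Prime 3) := ⟨by norm_num⟩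
    ∀ x y z w u : GaloisField 3 m,
      x ^ 2 + y ^ 2 + z ^ 2 + w ^ 2 + u ^ 2 = 0 →
      x ^ 4 + y ^ 4 + z ^ 4 + w ^ 4 + u ^ 4 = 0 →
      x ^ 10 + y ^ 10 + z ^ 10 + w ^ 10 + u ^ 10 = 0 →
      x = 0 ∨ y = 0 ∨ z = 0 ∨ w = 0 ∨ u = 0 := by
  intro x y z w u h₂ h₄ h₁₀
  exact zero_coordinate_of_power_sums h₂ h₄ h₁₀
end

section
/- Let p = 3, m a positive integer, and q = 3^m. A 4-tuple (x,y,z,w) ∈ F_q⁴ satisfies x² + y² − z² − w² = 0, x⁴ + y⁴ − z⁴ − w⁴ = 0, and x^{10} + y^{10} − z^{10} − w^{10} = 0 if and only if ((x = z or x = −z) and (y = w or y = −w)) or ((x = w or x = −w) and (y = z or y = −z)). -/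
/-- Two pairs of field elements whose squares have the same sum and the same sum of squares agree
up to order and signs, provided the characteristic is not two. -/
lemma eq_or_eq_neg_of_sum_sq_of_sum_pow_four {K : Type*} [Field K] (h2 : (2 : K) ≠ 0)
    {x y z w : K} (hsq : x ^ 2 + y ^ 2 - z ^ 2 - w ^ 2 = 0)
    (hfour : x ^ 4 + y ^ 4 - z ^ 4 - w ^ 4 = 0) :
    ((x = z ∨ x = -z) ∧ (y = w ∨ y = -w)) ∨ ((x = w ∨ x = -w) ∧ (y = z ∨ y = -z)) := by
  have hprod : (x ^ 2 - z ^ 2) * (x ^ 2 - w ^ 2) = 0 := by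
    refine (mul_eq_zero.mp ?_).resolve_left h2
    linear_combination (x ^ 2 - y ^ 2 - z ^ 2 - w ^ 2) * hsq + hfour
  rcases mul_eq_zero.mp hprod with h | h
  · exact Or.inl ⟨sq_eq_sq_iff_eq_or_eq_neg.mp (sub_eq_zero.mp h),
      sq_eq_sq_iff_eq_or_eq_neg.mp (by linear_combination hsq - h)⟩
  · exact Or.inr ⟨sq_eq_sq_iff_eq_or_eq_neg.mp (sub_eq_zero.mp h),
      sq_eq_sq_iff_eq_or_eq_neg.mp (by linear_combination hsq - h)⟩

theorem four_tuple_mixed_signs_iff (m : ℕ) (hm : 0 < m) :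
    letI : Fact (Nat.Prime 3) := ⟨by norm_num⟩
    ∀ x y z w : GaloisField 3 m,
      (x ^ 2 + y ^ 2 - z ^ 2 - w ^ 2 = 0 ∧
       x ^ 4 + y ^ 4 - z ^ 4 - w ^ 4 = 0 ∧
       x ^ 10 + y ^ 10 - z ^ 10 - w ^ 10 = 0) ↔
      (((x = z ∨ x = -z) ∧ (y = w ∨ y = -w)) ∨
       ((x = w ∨ x = -w) ∧ (y = z ∨ y = -z))) := by
  intro x y z w
  constructor
  · rintro ⟨hsq, hfour, -⟩
    exact eq_or_eq_neg_of_sum_sq_of_sum_pow_four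
      (Ring.two_ne_zero (by rw [ringChar.eq (GaloisField 3 m) 3]; norm_num)) hsq hfour
  · rintro (⟨rfl | rfl, rfl | rfl⟩ | ⟨rfl | rfl, rfl | rfl⟩) <;>
      refine ⟨?_, ?_, ?_⟩ <;> ring
end
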